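/- arXiv:1705.01366 — 4 statements merged into one kernel-verified Lean document; each statement's English description precedes it below -/
import Mathlib

section
/- Let A be an algebra over a field K and let L/K be a finite separable field extension. If A has finite global dimension and A ⊗_K L is Noetherian, then A ⊗_K L has finite global dimension. -/
open CategoryTheory TensorProduct

universe u

/-- `M` has projective dimension at most `n`: it admits a projective resolution
vanishing in degrees above `n`. -/
def HasProjDimLE (A : Type u) [Ring A] (M : ModuleCat.{u} A) (n : ℕ) : Prop :=
  ∃ P : ProjectiveResolution M, ∀ i, n < i → Limits.IsZero (P.complex.X i)

/-- `A` has finite (left) global dimension: there is a uniform bound on the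
projective dimensions of all (left) `A`-modules. -/
def HasFiniteGlobalDim (A : Type u) [Ring A] : Prop :=
  ∃ n : ℕ, ∀ M : ModuleCat.{u} A, HasProjDimLE A M n

/-- Splicing a short exact sequence `0 → X₁ → X₂ → X₃ → 0` with projective middle term with an
exact augmented complex `⋯ → Q₁ → Q₀ → X₁ → 0` of projectives gives a projective resolution
of `X₃`. -/
noncomputable def CategoryTheory.ShortComplex.ShortExact.projectiveResolutionOfAugment
    {C : Type*} [Category* C] [Abelian C] {S : ShortComplex C} (hS : S.ShortExact)
    [Projective S.X₂] (Q : ChainComplex C ℕ) (hQ : ∀ n, Projective (Q.X n)) (p : Q.X 0 ⟶ S.X₁)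
    [Epi p] (w : Q.d 1 0 ≫ p = 0) (h₀ : (ShortComplex.mk _ _ w).Exact)
    (h : ∀ n, (ShortComplex.mk _ _ (Q.d_comp_d (n + 2) (n + 1) n)).Exact) :
    ProjectiveResolution S.X₃ where
  complex := Q.augment (p ≫ S.f) (by rw [← Category.assoc, w, Limits.zero_comp])
  projective
    | 0 => ‹Projective S.X₂›
    | n + 1 => hQ n
  π := (ChainComplex.toSingle₀Equiv _ _).symm ⟨S.g, by
    have : (p ≫ S.f) ≫ S.g = 0 := by rw [Category.assoc, S.zero, Limits.comp_zero]
    exact this⟩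
  quasiIso := ⟨fun n ↦ by
    have := hS.mono_f
    have := hS.epi_g
    cases n with
    | zero =>
      rw [ChainComplex.quasiIsoAt₀_iff, ShortComplex.quasiIso_iff_of_zeros']
      · dsimp
        let T : ShortComplex C := ShortComplex.mk (p ≫ S.f) S.g
          (by rw [Category.assoc, S.zero, Limits.comp_zero])
        have hT : T.Exact := by
          let φ : T ⟶ S := { τ₁ := p, τ₂ := 𝟙 _, τ₃ := 𝟙 _ }
          have : Epi φ.τ₁ := ‹Epi p›
          have : IsIso φ.τ₂ := inferInstanceAs (IsIso (𝟙 S.X₂))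
          have : Mono φ.τ₃ := inferInstanceAs (Mono (𝟙 S.X₃))
          exact (ShortComplex.exact_iff_of_epi_of_isIso_of_mono φ).2 hS.exact
        refine (ShortComplex.exact_and_epi_g_iff_of_iso ?_).2 ⟨hT, ‹Epi S.g›⟩
        refine ShortComplex.isoMk (Iso.refl _) (Iso.refl _) (Iso.refl _)
          ((Category.id_comp _).trans (Category.comp_id _).symm)
          ((Category.id_comp _).trans (Eq.trans ?_ (Category.comp_id _).symm))
        exact (ChainComplex.toSingle₀Equiv_symm_apply_f_zero (X := S.X₃)
          (C := Q.augment (p ≫ S.f) (by rw [← Category.assoc, w, Limits.zero_comp]))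
          S.g T.zero).symm
      all_goals rfl
    | succ n =>
      rw [quasiIsoAt_iff_exactAt' _ _ (ChainComplex.exactAt_succ_single_obj _ _),
        HomologicalComplex.exactAt_iff' _ (n + 2) (n + 1) n (by simp) (by simp)]
      cases n with
      | zero =>
        let T : ShortComplex C := ShortComplex.mk (Q.d 1 0) (p ≫ S.f)
          (by rw [← Category.assoc, w, Limits.zero_comp])
        let φ : ShortComplex.mk _ _ w ⟶ T := { τ₁ := 𝟙 _, τ₂ := 𝟙 _, τ₃ := S.f }
        have : Epi φ.τ₁ := inferInstanceAs (Epi (𝟙 (Q.X 1)))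
        have : IsIso φ.τ₂ := inferInstanceAs (IsIso (𝟙 (Q.X 0)))
        have : Mono φ.τ₃ := ‹Mono S.f›
        exact (ShortComplex.exact_iff_of_epi_of_isIso_of_mono φ).1 h₀
      | succ n => exact h n⟩

/-- Splicing a short exact sequence `0 → X₁ → X₂ → X₃ → 0` with projective middle term with a
projective resolution of `X₁` gives a projective resolution of `X₃`. -/
noncomputable def CategoryTheory.ShortComplex.ShortExact.spliceProjectiveResolution
    {C : Type*} [Category* C] [Abelian C] {S : ShortComplex C} (hS : S.ShortExact)
    [Projective S.X₂] (P : ProjectiveResolution S.X₁) : ProjectiveResolution S.X₃ :=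
  have : Epi (C := C) (X := P.complex.X 0) (Y := S.X₁) (P.π.f 0) :=
    inferInstanceAs (Epi (P.π.f 0))
  hS.projectiveResolutionOfAugment P.complex P.projective (P.π.f 0)
    P.complex_d_comp_π_f_zero (ShortComplex.exact_of_g_is_cokernel _ P.isColimitCokernelCofork)
    P.exact_succ

/-- A module has a projective resolution of length `n` if and only if its `Ext`-theoretic
projective dimension is at most `n`. -/
lemma hasProjDimLE_iff_hasProjectiveDimensionLE {A : Type u} [Ring A] (M : ModuleCat.{u} A)
    (n : ℕ) : HasProjDimLE A M n ↔ HasProjectiveDimensionLE M n := by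
  constructor
  · rintro ⟨P, hP⟩
    refine HasProjectiveDimensionLT.mk fun i hi Y e ↦ ?_
    obtain ⟨f, hf, rfl⟩ := P.extMk_surjective e (i + 1) rfl
    obtain rfl : f = 0 := (hP i hi).eq_of_src _ _
    simp
  · intro h
    induction n generalizing M with
    | zero =>
      have := (projective_iff_hasProjectiveDimensionLE_zero _).2 h
      exact ⟨ProjectiveResolution.self M, fun i hi ↦
        HomologicalComplex.isZero_single_obj_X _ _ _ _ hi.ne'⟩
    | succ n ih =>
      have hS := M.shortExact_projectiveShortComplex
      obtain ⟨P, hP⟩ := ih _ ((hS.hasProjectiveDimensionLT_X₃_iff n inferInstance).1 h)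
      refine ⟨hS.spliceProjectiveResolution P, ?_⟩
      rintro (_ | i) hi
      · lia
      · exact hP i (by lia)

section BaseChange

variable {K L A : Type*} [Field K] [Field L] [Algebra K L] [Ring A] [Algebra K A]
  {M N : Type*} [AddCommGroup M] [Module (A ⊗[K] L) M] [AddCommGroup N] [Module (A ⊗[K] L) N]

section Twist

variable [Module K M] [IsScalarTower K (A ⊗[K] L) M] [Module K N] [IsScalarTower K (A ⊗[K] L) N]

variable (A) in
/-- The action of `L ⊗[K] L` on `K`-linear maps between `A ⊗[K] L`-modules, given by
`((x ⊗ y) • s) m = x • s (y • m)`. -/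
noncomputable def twist (s : M →ₗ[K] N) : L ⊗[K] L →ₗ[K] M →ₗ[K] N :=
  let ι : L →ₐ[K] A ⊗[K] L := Algebra.TensorProduct.includeRight
  TensorProduct.lift (LinearMap.mk₂ K
    (fun x y ↦ Algebra.lsmul K K N (ι x) ∘ₗ s ∘ₗ Algebra.lsmul K K M (ι y))
    (by intros; ext; simp)
    (by intros; ext; simp)
    (by intros; ext; simp)
    (by intros; ext; simp [smul_algebra_smul_comm]))

@[simp]
lemma twist_tmul (s : M →ₗ[K] N) (x y : L) (m : M) :
    twist A s (x ⊗ₜ y) m = ((1 : A) ⊗ₜ[K] x) • s (((1 : A) ⊗ₜ[K] y) • m) := rfl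

lemma twist_tmul_one_mul (s : M →ₗ[K] N) (l : L) (t : L ⊗[K] L) (m : M) :
    twist A s ((l ⊗ₜ 1) * t) m = ((1 : A) ⊗ₜ[K] l) • twist A s t m := by
  induction t with
  | zero => simp
  | tmul x y => simp [smul_smul]
  | add x y hx hy => simp [mul_add, hx, hy]

lemma twist_one_tmul_mul (s : M →ₗ[K] N) (l : L) (t : L ⊗[K] L) (m : M) :
    twist A s ((1 ⊗ₜ l) * t) m = twist A s t (((1 : A) ⊗ₜ[K] l) • m) := by
  induction t with
  | zero => simp
  | tmul x y => simp [smul_smul, mul_comm l y]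
  | add x y hx hy => simp [mul_add, hx, hy]

lemma twist_smul {s : M →ₗ[K] N}
    (hs : ∀ (a : A) (m : M), s ((a ⊗ₜ[K] (1 : L)) • m) = (a ⊗ₜ[K] (1 : L)) • s m)
    (a : A) (t : L ⊗[K] L) (m : M) :
    twist A s t ((a ⊗ₜ[K] (1 : L)) • m) = (a ⊗ₜ[K] (1 : L)) • twist A s t m := by
  induction t with
  | zero => simp
  | tmul x y =>
    have h (z : L) : ((1 : A) ⊗ₜ[K] z) * (a ⊗ₜ[K] (1 : L)) = (a ⊗ₜ[K] (1 : L)) * (1 ⊗ₜ[K] z) := by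
      simp
    simp only [twist_tmul, smul_smul, h]
    rw [mul_smul, hs, smul_smul, h]
  | add x y hx hy => simp [hx, hy]

lemma map_twist (f : N →ₗ[A ⊗[K] L] M) {s : M →ₗ[K] N} (hs : ∀ m, f (s m) = m)
    (t : L ⊗[K] L) (m : M) :
    f (twist A s t m) = ((1 : A) ⊗ₜ[K] Algebra.TensorProduct.lmul' K t) • m := by
  induction t with
  | zero => simp
  | tmul x y => simp [hs, smul_smul]
  | add x y hx hy => simp [hx, hy, TensorProduct.tmul_add, add_smul]

end Twist

variable [Module A M] [IsScalarTower A (A ⊗[K] L) M] [Module A N] [IsScalarTower A (A ⊗[K] L) N]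

/-- If `L/K` is formally unramified and essentially of finite type, then a surjection of
`A ⊗[K] L`-modules that splits over `A` splits over `A ⊗[K] L`. -/
lemma exists_rightInverse_of_baseChange_unramified [Algebra.FormallyUnramified K L]
    [Algebra.EssFiniteType K L] (f : N →ₗ[A ⊗[K] L] M) (s : M →ₗ[A] N) (hs : ∀ m, f (s m) = m) :
    ∃ s' : M →ₗ[A ⊗[K] L] N, f ∘ₗ s' = LinearMap.id := by
  let _ : Module K M := Module.compHom M (algebraMap K (A ⊗[K] L))
  let _ : Module K N := Module.compHom N (algebraMap K (A ⊗[K] L))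
  have : IsScalarTower K (A ⊗[K] L) M :=
    ⟨fun k b m ↦ by rw [Algebra.smul_def, mul_smul]; rfl⟩
  have : IsScalarTower K (A ⊗[K] L) N :=
    ⟨fun k b m ↦ by rw [Algebra.smul_def, mul_smul]; rfl⟩
  have hM (a : A) (m : M) : (a ⊗ₜ[K] (1 : L)) • m = a • m := by
    rw [← smul_one_smul (A ⊗[K] L) a m, Algebra.TensorProduct.one_def, TensorProduct.smul_tmul',
      smul_eq_mul, mul_one]
  have hN (a : A) (m : N) : (a ⊗ₜ[K] (1 : L)) • m = a • m := by
    rw [← smul_one_smul (A ⊗[K] L) a m, Algebra.TensorProduct.one_def, TensorProduct.smul_tmul',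
      smul_eq_mul, mul_one]
  let sK : M →ₗ[K] N :=
    { s with
      map_smul' := fun k m ↦ by
        change s ((algebraMap K A k ⊗ₜ[K] (1 : L)) • m) = (algebraMap K A k ⊗ₜ[K] (1 : L)) • s m
        rw [hM, hN, map_smul] }
  let t := Algebra.FormallyUnramified.elem K L
  have hsK (a : A) (m : M) : sK ((a ⊗ₜ[K] (1 : L)) • m) = (a ⊗ₜ[K] (1 : L)) • sK m := by
    rw [hM, hN]
    exact map_smul s a m
  refine ⟨{ twist A sK t with map_smul' := fun b m ↦ ?_ }, LinearMap.ext fun m ↦ ?_⟩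
  · change twist A sK t (b • m) = b • twist A sK t m
    induction b with
    | zero => simp
    | tmul a l =>
      have h : a ⊗ₜ[K] l = (a ⊗ₜ[K] (1 : L)) * ((1 : A) ⊗ₜ[K] l) := by simp
      rw [h, mul_smul, twist_smul hsK, mul_smul, ← twist_tmul_one_mul, ← twist_one_tmul_mul,
        Algebra.FormallyUnramified.one_tmul_mul_elem]
    | add x y hx hy => rw [add_smul, map_add, hx, hy, add_smul]
  · change f (twist A sK t m) = m
    rw [map_twist f hs, Algebra.FormallyUnramified.lmul_elem, ← Algebra.TensorProduct.one_def,
      one_smul]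

variable (K L A M) in
/-- If `L/K` is formally unramified and essentially of finite type, then an `A ⊗[K] L`-module
that is projective over `A` is projective over `A ⊗[K] L`. -/
lemma projective_of_baseChange_unramified [Algebra.FormallyUnramified K L]
    [Algebra.EssFiniteType K L] [Module.Projective A M] : Module.Projective (A ⊗[K] L) M := by
  let f : (M →₀ A ⊗[K] L) →ₗ[A ⊗[K] L] M := Finsupp.linearCombination _ id
  have hf : Function.Surjective f := Finsupp.linearCombination_id_surjective _ _
  obtain ⟨s, hs⟩ := Module.projective_lifting_property (f.restrictScalars A) LinearMap.id hf
  obtain ⟨s', hs'⟩ := exists_rightInverse_of_baseChange_unramified f s (LinearMap.congr_fun hs)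
  exact Module.Projective.of_split s' f hs'

end BaseChange

/-- If `L/K` is formally unramified and essentially of finite type, then the projective dimension
of an `A ⊗[K] L`-module is at most its projective dimension over `A`. -/
lemma hasProjectiveDimensionLE_of_baseChange_unramified (K L A : Type u) [Field K] [Field L]
    [Algebra K L] [Algebra.FormallyUnramified K L] [Algebra.EssFiniteType K L] [Ring A]
    [Algebra K A] (M : Type u) [AddCommGroup M] [Module (A ⊗[K] L) M] [Module A M]
    [IsScalarTower A (A ⊗[K] L) M] (n : ℕ) (h : HasProjectiveDimensionLE (ModuleCat.of A M) n) :
    HasProjectiveDimensionLE (ModuleCat.of (A ⊗[K] L) M) n := by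
  induction n generalizing M with
  | zero =>
    rw [← projective_iff_hasProjectiveDimensionLE_zero, ← IsProjective.iff_projective] at h ⊢
    exact projective_of_baseChange_unramified K L A M
  | succ n ih =>
    let f : (M →₀ A ⊗[K] L) →ₗ[A ⊗[K] L] M := Finsupp.linearCombination _ id
    have hf : Function.Surjective f := Finsupp.linearCombination_id_surjective _ _
    have hS := LinearMap.shortExact_shortComplexKer hf
    have hSA := LinearMap.shortExact_shortComplexKer (f := f.restrictScalars A) hf
    have : Module.Free A (A ⊗[K] L) :=
      Module.Free.of_basis (Algebra.TensorProduct.basis A (Module.Free.chooseBasis K L))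
    have h₂ : Projective (ModuleCat.of (A ⊗[K] L) (M →₀ A ⊗[K] L)) :=
      (IsProjective.iff_projective _).1 inferInstance
    have h₂A : Projective (ModuleCat.of A (M →₀ A ⊗[K] L)) :=
      (IsProjective.iff_projective _).1 inferInstance
    exact (hS.hasProjectiveDimensionLT_X₃_iff n h₂).2 <|
      ih f.ker ((hSA.hasProjectiveDimensionLT_X₃_iff n h₂A).1 h)

/-- If `A` is an algebra over a field `K` with finite global dimension, `L/K` is a finite
separable field extension, and `A ⊗[K] L` is Noetherian, then `A ⊗[K] L` has finite
global dimension. -/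
theorem finiteGlobalDim_of_baseChange_separable
    (K L A : Type u) [Field K] [Field L] [Algebra K L] [FiniteDimensional K L]
    [Algebra.IsSeparable K L] [Ring A] [Algebra K A]
    (hA : HasFiniteGlobalDim A)
    (hNoeth : IsNoetherianRing (A ⊗[K] L)) :
    HasFiniteGlobalDim (A ⊗[K] L) := by
  obtain ⟨n, hn⟩ := hA
  have := Algebra.FormallyUnramified.of_isSeparable K L
  refine ⟨n, fun M ↦ (hasProjDimLE_iff_hasProjectiveDimensionLE M n).2 ?_⟩
  let _ : Module A M :=
    Module.compHom M (Algebra.TensorProduct.includeLeftRingHom : A →+* A ⊗[K] L)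
  have : IsScalarTower A (A ⊗[K] L) M := ⟨fun a b m ↦ by
    rw [← one_mul b, ← smul_mul_assoc, mul_smul, one_mul, Algebra.TensorProduct.one_def,
      TensorProduct.smul_tmul', smul_eq_mul, mul_one]
    rfl⟩
  exact hasProjectiveDimensionLE_of_baseChange_unramified K L A M n
    ((hasProjDimLE_iff_hasProjectiveDimensionLE _ n).1 (hn _))
end

section
/- Let A be a ring such that both A and its opposite ring A^op are Noetherian. If A has finite left global dimension then A^op has finite left global dimension (equivalently, A has finite right global dimension, and the two are equal). -/
open CategoryTheory

universe u

universe v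

open Limits in
/-- Splicing a chain complex of projectives which resolves the kernel onto a short exact sequence
with projective middle term gives a projective resolution of the cokernel. -/
noncomputable def CategoryTheory.ShortComplex.ShortExact.projectiveResolutionOfAugmentation
    {C : Type u} [Category.{v} C] [Abelian C] {S : ShortComplex C} (hS : S.ShortExact)
    (hP : Projective S.X₂) (K : ChainComplex C ℕ) (hK : ∀ n, Projective (K.X n))
    (p : K.X 0 ⟶ S.X₁) [Epi p] (w : K.d 1 0 ≫ p = 0) (h₀ : (ShortComplex.mk _ _ w).Exact)
    (hK' : ∀ n, K.ExactAt (n + 1)) : ProjectiveResolution S.X₃ where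
  complex := K.augment (p ≫ S.f) (by simp [reassoc_of% w])
  projective
    | 0 => hP
    | n + 1 => hK n
  π := (ChainComplex.toSingle₀Equiv _ _).symm ⟨S.g, (by simp : (p ≫ S.f) ≫ S.g = 0)⟩
  quasiIso := ⟨fun n ↦ by
    have := hS.mono_f
    match n with
    | 0 =>
      have hE : (ShortComplex.mk (p ≫ S.f) S.g (by simp)).Exact := by
        let α : ShortComplex.mk (p ≫ S.f) S.g (by simp) ⟶ S :=
          { τ₁ := p
            τ₂ := 𝟙 _
            τ₃ := 𝟙 _ }
        exact (ShortComplex.exact_iff_of_epi_of_isIso_of_mono α).2 hS.exact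
      rw [ChainComplex.quasiIsoAt₀_iff, ShortComplex.quasiIso_iff_of_zeros']
      · have hg := ChainComplex.toSingle₀Equiv_symm_apply_f_zero
          (C := K.augment (p ≫ S.f) (by simp [reassoc_of% w])) S.g
          (by simp : (p ≫ S.f) ≫ S.g = 0)
        refine (ShortComplex.exact_and_epi_g_iff_of_iso ?_).2 ⟨hE, hS.epi_g⟩
        exact ShortComplex.isoMk (Iso.refl _) (Iso.refl _) (Iso.refl _)
          ((Category.id_comp _).trans (Category.comp_id _).symm)
          ((Category.id_comp _).trans (hg.symm.trans (Category.comp_id _).symm))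
      all_goals rfl
    | 1 =>
      rw [quasiIsoAt_iff_exactAt' _ _ (ChainComplex.exactAt_succ_single_obj _ _),
        HomologicalComplex.exactAt_iff' _ 2 1 0 (by simp) (by simp)]
      let α : ShortComplex.mk _ _ w ⟶
          (K.augment (p ≫ S.f) (by simp [reassoc_of% w])).sc' 2 1 0 :=
        { τ₁ := 𝟙 _
          τ₂ := 𝟙 _
          τ₃ := S.f
          comm₁₂ := (Category.id_comp _).trans (Category.comp_id _).symm
          comm₂₃ := Category.id_comp _ }
      have : Epi α.τ₁ := inferInstanceAs (Epi (𝟙 _))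
      have : IsIso α.τ₂ := inferInstanceAs (IsIso (𝟙 _))
      have : Mono α.τ₃ := inferInstanceAs (Mono S.f)
      exact (ShortComplex.exact_iff_of_epi_of_isIso_of_mono α).1 h₀
    | n + 2 =>
      rw [quasiIsoAt_iff_exactAt' _ _ (ChainComplex.exactAt_succ_single_obj _ _),
        HomologicalComplex.exactAt_iff' _ (n + 3) (n + 2) (n + 1) (by simp) (by simp)]
      exact (K.exactAt_iff' (n + 2) (n + 1) n (by simp) (by simp)).1 (hK' n)⟩

theorem HasProjDimLE.hasProjectiveDimensionLE {A : Type u} [Ring A] {M : ModuleCat.{u} A} {n : ℕ}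
    (h : HasProjDimLE A M n) : HasProjectiveDimensionLE M n := by
  obtain ⟨P, hP⟩ := h
  refine (hasProjectiveDimensionLT_iff _ _).2 fun i hi Y e ↦ ?_
  obtain ⟨f, hf, rfl⟩ := P.extMk_surjective e (i + 1) rfl
  obtain rfl : f = 0 := (hP i hi).eq_of_src _ _
  exact P.extMk_zero _ _

theorem HasProjDimLE.of_hasProjectiveDimensionLE {A : Type u} [Ring A] {n : ℕ}
    {M : ModuleCat.{u} A} (h : HasProjectiveDimensionLE M n) : HasProjDimLE A M n := by
  induction n generalizing M with
  | zero =>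
    have : Projective M := (projective_iff_hasProjectiveDimensionLE_zero M).2 h
    exact ⟨.self M, fun i hi ↦ HomologicalComplex.isZero_single_obj_X _ _ _ _ hi.ne'⟩
  | succ n ih =>
    have hS := M.shortExact_projectiveShortComplex
    obtain ⟨P, hP⟩ := ih ((hS.hasProjectiveDimensionLT_X₃_iff n inferInstance).1 h)
    have : Epi (Y := M.projectiveShortComplex.X₁) (P.π.f 0) := inferInstanceAs (Epi (P.π.f 0))
    refine ⟨hS.projectiveResolutionOfAugmentation inferInstance P.complex P.projective (P.π.f 0)
      P.complex_d_comp_π_f_zero P.exact₀ P.complex_exactAt_succ, fun i hi ↦ ?_⟩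
    obtain ⟨i, rfl⟩ := Nat.exists_eq_succ_of_ne_zero (Nat.ne_zero_of_lt hi)
    exact hP i (by omega)

open Abelian in
theorem hasInjectiveDimensionLE_of_subsingleton_ext_quotient {R : Type u} [Ring R] (n : ℕ)
    (N : ModuleCat.{u} R)
    (h : ∀ I : Ideal R, Subsingleton (Ext (ModuleCat.of R (R ⧸ I)) N (n + 1))) :
    HasInjectiveDimensionLE N n := by
  induction n generalizing N with
  | zero =>
    suffices Injective N from inferInstanceAs (HasInjectiveDimensionLT N 1)
    rw [← Module.injective_iff_injective_object R N, ← Module.Baer.iff_injective]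
    intro I g
    let S : ShortComplex (ModuleCat.{u} R) :=
      ModuleCat.shortComplexOfCompEqZero I.subtype I.mkQ
        (LinearMap.exact_subtype_mkQ I).linearMap_comp_eq_zero
    have hS : S.ShortExact := ModuleCat.shortComplex_shortExact S
      (LinearMap.exact_subtype_mkQ I) I.injective_subtype I.mkQ_surjective
    obtain ⟨x, hx⟩ := Ext.contravariant_sequence_exact₁ hS N (Ext.mk₀ (ModuleCat.ofHom g))
      (n₁ := 1) rfl ((h I).elim _ _)
    obtain ⟨f, rfl⟩ := Ext.addEquiv₀.symm.surjective x
    simp only [Ext.addEquiv₀_symm_apply, Ext.mk₀_comp_mk₀] at hx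
    have := Ext.addEquiv₀.symm.injective hx
    refine ⟨f.hom, fun x mem ↦ ?_⟩
    exact congrArg (fun φ : ModuleCat.of R I ⟶ N ↦ φ.hom ⟨x, mem⟩) this
  | succ n ih =>
    let S : ShortComplex (ModuleCat.{u} R) := .mk _ _ (Limits.cokernel.condition (Injective.ι N))
    have hS : S.ShortExact :=
      { exact := ShortComplex.exact_of_g_is_cokernel _ (Limits.cokernelIsCokernel _) }
    refine (hS.hasInjectiveDimensionLT_X₃_iff n inferInstance).1 (ih _ fun I ↦ ?_)
    refine subsingleton_of_forall_eq 0 fun x ↦ ?_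
    obtain ⟨y, rfl⟩ := Ext.covariant_sequence_exact₃ _ hS x rfl ((h I).elim _ _)
    rw [y.eq_zero_of_injective, Ext.zero_comp]

theorem hasProjectiveDimensionLE_of_quotient {R : Type u} [Ring R] (n : ℕ)
    (h : ∀ I : Ideal R, HasProjectiveDimensionLE (ModuleCat.of R (R ⧸ I)) n)
    (M : ModuleCat.{u} R) : HasProjectiveDimensionLE M n := by
  refine (hasProjectiveDimensionLT_iff _ _).2 fun i hi Y e ↦ ?_
  have : HasInjectiveDimensionLE Y n := hasInjectiveDimensionLE_of_subsingleton_ext_quotient n Y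
    fun I ↦ (h I).subsingleton _ _ _ le_rfl _
  exact e.eq_zero_of_hasInjectiveDimensionLT _ hi

section RightModules

open Matrix

/-- The action of a matrix on tuples of elements of a left module. -/
def Matrix.smulVec {A X m n : Type*} [Semiring A] [AddCommMonoid X] [Module A X] [Fintype n]
    (D : Matrix m n A) (x : n → X) : m → X :=
  fun j ↦ ∑ k, D j k • x k

section smulVec

variable {A X Y m n p : Type*} [Ring A] [AddCommGroup X] [Module A X] [AddCommGroup Y] [Module A Y]
  [Fintype n] [Fintype p]

theorem Matrix.smulVec_map (f : X →ₗ[A] Y) (D : Matrix m n A) (x : n → X) :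
    D.smulVec (f ∘ x) = f ∘ D.smulVec x := by
  ext j
  simp [Matrix.smulVec]

theorem Matrix.smulVec_sub (D : Matrix m n A) (x y : n → X) :
    D.smulVec (x - y) = D.smulVec x - D.smulVec y := by
  ext j
  simp [Matrix.smulVec, smul_sub, Finset.sum_sub_distrib]

theorem Matrix.smulVec_zero (D : Matrix m n A) : D.smulVec (0 : n → X) = 0 := by
  ext j
  simp [Matrix.smulVec]

theorem Matrix.smulVec_smulVec (D : Matrix m n A) (E : Matrix n p A) (x : p → X) :
    D.smulVec (E.smulVec x) = (D * E).smulVec x := by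
  ext j
  simp only [Matrix.smulVec, Matrix.mul_apply, Finset.smul_sum, Finset.sum_smul, mul_smul]
  exact Finset.sum_comm

end smulVec

/-- The sequence `Xᵖ → Xⁿ → Xᵐ` given by the matrices `E` and `D` is exact in the middle. -/
def Matrix.ExactOn {A m n p : Type*} [Ring A] [Fintype n] [Fintype p]
    (D : Matrix m n A) (E : Matrix n p A) (X : Type*) [AddCommGroup X] [Module A X] : Prop :=
  ∀ x : n → X, D.smulVec x = 0 → ∃ y, E.smulVec y = x

namespace Matrix.ExactOn

variable {A m n p q : Type*} [Ring A] [Fintype n] [Fintype p] [Fintype q]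
  {D : Matrix m n A} {E : Matrix n p A}

theorem finsupp (h : D.ExactOn E A) (ι : Type*) : D.ExactOn E (ι →₀ A) := by
  classical
  intro x hx
  have hx' (a : ι) : ∃ w : p → A, E.smulVec w = (fun k ↦ x k a) ∧
      ((fun k ↦ x k a) = 0 → w = 0) := by
    by_cases h0 : (fun k ↦ x k a) = 0
    · exact ⟨0, by rw [h0, smulVec_zero], fun _ ↦ rfl⟩
    · obtain ⟨w, hw⟩ := h (fun k ↦ x k a) (by
        have := D.smulVec_map (Finsupp.lapply a : (ι →₀ A) →ₗ[A] A) x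
        rw [hx] at this
        exact this.trans (by ext; simp))
      exact ⟨w, hw, fun h ↦ (h0 h).elim⟩
  choose w hw hw' using hx'
  refine ⟨fun l ↦ Finsupp.onFinset (Finset.univ.biUnion fun k ↦ (x k).support) (fun a ↦ w a l)
    fun a ha ↦ ?_, ?_⟩
  · by_contra hc
    refine ha (congrFun (hw' a ?_) l)
    ext k
    simpa using fun h : x k a ≠ 0 ↦ hc (by simpa using ⟨k, h⟩)
  · ext k a
    simpa [smulVec, Finsupp.finsetSum_apply] using congrFun (hw a) k

theorem of_projective (h : D.ExactOn E A) (X : Type*) [AddCommGroup X] [Module A X]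
    [Module.Projective A X] : D.ExactOn E X := by
  obtain ⟨s, hs⟩ := Module.projective_def'.1 ‹Module.Projective A X›
  intro x hx
  obtain ⟨y, hy⟩ := h.finsupp X (s ∘ x) (by
    rw [smulVec_map, hx]
    ext
    simp)
  refine ⟨Finsupp.linearCombination A id ∘ y, ?_⟩
  rw [smulVec_map, hy]
  ext k
  exact LinearMap.congr_fun hs (x k)

/-- Dimension shifting: exactness on the middle and the kernel of a surjection gives exactness on
the target one degree higher. -/
theorem of_surjective {F : Matrix p q A} {P X : Type*} [AddCommGroup P] [Module A P]
    [AddCommGroup X] [Module A X] {f : P →ₗ[A] X} (hf : Function.Surjective f) (hDE : D * E = 0)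
    (hP : E.ExactOn F P) (hK : D.ExactOn E f.ker) : E.ExactOn F X := by
  intro x hx
  choose g hg using hf
  have hfg : f ∘ (g ∘ x) = x := funext fun k ↦ hg _
  have hker (k : n) : E.smulVec (g ∘ x) k ∈ f.ker := by
    have : (f ∘ E.smulVec (g ∘ x)) k = 0 := by rw [← smulVec_map, hfg, hx]; rfl
    exact this
  obtain ⟨y, hy⟩ := hK (fun k ↦ ⟨_, hker k⟩) (by
    have hi : Function.Injective (fun z : m → f.ker ↦ f.ker.subtype ∘ z) :=
      f.ker.injective_subtype.comp_left
    apply hi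
    change f.ker.subtype ∘ _ = f.ker.subtype ∘ _
    rw [← smulVec_map]
    change D.smulVec (E.smulVec (g ∘ x)) = _
    rw [smulVec_smulVec, hDE]
    ext j
    simp [smulVec])
  have hy' : E.smulVec (f.ker.subtype ∘ y) = E.smulVec (g ∘ x) := by
    rw [smulVec_map, hy]
    rfl
  obtain ⟨z, hz⟩ := hP (g ∘ x - f.ker.subtype ∘ y) (by rw [smulVec_sub, hy', sub_self])
  refine ⟨f ∘ z, ?_⟩
  rw [smulVec_map, hz]
  ext k
  simp [hg]

/-- If `D` and `E` form an exact sequence on every left module, then `D` is von Neumann regular. -/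
theorem exists_mul_mul_eq {A : Type u} {m n p : Type} [Ring A] [Fintype m] [Fintype n] [Fintype p]
    {D : Matrix m n A} {E : Matrix n p A} (hDE : D * E = 0)
    (h : ∀ (X : Type u) [AddCommGroup X] [Module A X], D.ExactOn E X) :
    ∃ W : Matrix n m A, D * W * D = D := by
  classical
  let S : Submodule A (n → A) := Submodule.span A (Set.range fun j ↦ D j)
  obtain ⟨y, hy⟩ := h ((n → A) ⧸ S) (fun k ↦ S.mkQ (Pi.single k 1)) (by
    ext j
    have : ∑ k, D j k • (Pi.single k 1 : n → A) = D j := by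
      ext k
      simp [Finset.sum_apply, Pi.single_apply]
    simp only [smulVec, ← map_smul, ← map_sum, this]
    exact (Submodule.Quotient.mk_eq_zero S).2 (Submodule.subset_span ⟨j, rfl⟩))
  choose Y hY using fun l ↦ S.mkQ_surjective (y l)
  have hmem (k : n) : Pi.single k 1 - E.smulVec Y k ∈ S := by
    rw [← Submodule.Quotient.eq]
    change S.mkQ _ = S.mkQ _
    refine (congrFun hy k).symm.trans ?_
    rw [← funext hY]
    exact congrFun (smulVec_map S.mkQ E Y) k
  choose W hW using fun k ↦ Submodule.mem_span_range_iff_exists_fun A |>.1 (hmem k)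
  have hE : (1 : Matrix n n A) - E * of Y = of W * D := by
    ext k l
    have := congrFun (hW k) l
    simp only [Finset.sum_apply, Pi.smul_apply, Pi.sub_apply, smul_eq_mul, smulVec] at this
    simp [Matrix.mul_apply, this, Matrix.one_apply, Pi.single_apply, eq_comm]
  refine ⟨of W, ?_⟩
  rw [Matrix.mul_assoc, ← hE, Matrix.mul_sub, ← Matrix.mul_assoc, hDE, Matrix.zero_mul, sub_zero,
    Matrix.mul_one]

end Matrix.ExactOn

variable {A : Type u} [Ring A]

theorem Matrix.ExactOn.of_hasProjectiveDimensionLE {m : ℕ → ℕ}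
    {D : ∀ i, Matrix (Fin (m i)) (Fin (m (i + 1))) A} (hD : ∀ i, D i * D (i + 1) = 0)
    (h : ∀ i, (D i).ExactOn (D (i + 1)) A) (n : ℕ) (X : ModuleCat.{u} A)
    (hX : HasProjectiveDimensionLE X n) : (D n).ExactOn (D (n + 1)) X := by
  induction n generalizing X with
  | zero =>
    have : Projective X := (projective_iff_hasProjectiveDimensionLE_zero X).2 hX
    have : Module.Projective A X := (IsProjective.iff_projective X).2 this
    exact (h 0).of_projective X
  | succ n ih =>
    have hS := X.shortExact_projectiveShortComplex
    exact of_surjective hS.moduleCat_surjective_g (hD n) ((h (n + 1)).of_projective _)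
      (ih _ ((hS.hasProjectiveDimensionLT_X₃_iff n inferInstance).1 hX))

instance : Module.Free Aᵐᵒᵖ A := .of_equiv (MulOpposite.opLinearEquiv Aᵐᵒᵖ : A ≃ₗ[Aᵐᵒᵖ] Aᵐᵒᵖ).symm

instance [IsNoetherianRing Aᵐᵒᵖ] : IsNoetherian Aᵐᵒᵖ A :=
  isNoetherian_of_linearEquiv (MulOpposite.opLinearEquiv Aᵐᵒᵖ : A ≃ₗ[Aᵐᵒᵖ] Aᵐᵒᵖ).symm

theorem exists_matrix_range_eq [IsNoetherianRing Aᵐᵒᵖ] {m : ℕ} (K : Submodule Aᵐᵒᵖ (Fin m → A)) :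
    ∃ (n : ℕ) (D : Matrix (Fin m) (Fin n) A), (mulVecBilin A Aᵐᵒᵖ D).range = K := by
  obtain ⟨n, s, hs⟩ := Submodule.fg_iff_exists_fin_generating_family.1 (IsNoetherian.noetherian K)
  refine ⟨n, of fun j k ↦ s k j, ?_⟩
  ext v
  rw [← hs, Submodule.mem_span_range_iff_exists_fun, LinearMap.mem_range]
  have key (w : Fin n → A) : mulVecBilin A Aᵐᵒᵖ (of fun j k ↦ s k j) w =
      ∑ k, MulOpposite.op (w k) • s k := by
    ext j
    simp [mulVec, dotProduct]
  constructor
  · rintro ⟨w, rfl⟩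
    exact ⟨fun k ↦ MulOpposite.op (w k), (key w).symm⟩
  · rintro ⟨c, rfl⟩
    exact ⟨fun k ↦ (c k).unop, key _⟩

theorem exists_matrix_resolution [IsNoetherianRing Aᵐᵒᵖ] {p : ℕ}
    (K : Submodule Aᵐᵒᵖ (Fin p → A)) :
    ∃ (m : ℕ → ℕ) (D : ∀ i, Matrix (Fin (m i)) (Fin (m (i + 1))) A),
      (∃ e : (Fin (m 0) → A) ≃ₗ[Aᵐᵒᵖ] (Fin p → A),
        K = (mulVecBilin A Aᵐᵒᵖ (D 0)).range.map e.toLinearMap) ∧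
      ∀ i, (mulVecBilin A Aᵐᵒᵖ (D (i + 1))).range = (mulVecBilin A Aᵐᵒᵖ (D i)).ker := by
  obtain ⟨q, D₀, hD₀⟩ := exists_matrix_range_eq K
  let next (s : Σ a : ℕ × ℕ, Matrix (Fin a.1) (Fin a.2) A) :
      Σ a : ℕ × ℕ, Matrix (Fin a.1) (Fin a.2) A :=
    ⟨(s.1.2, (exists_matrix_range_eq (mulVecBilin A Aᵐᵒᵖ s.2).ker).choose),
      (exists_matrix_range_eq (mulVecBilin A Aᵐᵒᵖ s.2).ker).choose_spec.choose⟩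
  let s (i : ℕ) : Σ a : ℕ × ℕ, Matrix (Fin a.1) (Fin a.2) A :=
    Nat.rec ⟨(p, q), D₀⟩ (fun _ ↦ next) i
  refine ⟨fun i ↦ (s i).1.1, fun i ↦ (s i).2, ⟨.refl _ _, ?_⟩, fun i ↦ ?_⟩
  · exact hD₀.symm.trans (Submodule.map_id _).symm
  · exact (exists_matrix_range_eq (mulVecBilin A Aᵐᵒᵖ (s i).2).ker).choose_spec.choose_spec

theorem projective_range_mulVecBilin {m n : ℕ} {D : Matrix (Fin m) (Fin n) A}
    {W : Matrix (Fin n) (Fin m) A} (h : D * W * D = D) :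
    Module.Projective Aᵐᵒᵖ (mulVecBilin A Aᵐᵒᵖ D).range := by
  refine .of_split (M := Fin n → A) ((mulVecBilin A Aᵐᵒᵖ W).comp (Submodule.subtype _))
    (mulVecBilin A Aᵐᵒᵖ D).rangeRestrict ?_
  ext ⟨_, v, rfl⟩ j
  change (D *ᵥ (W *ᵥ (D *ᵥ v))) j = (D *ᵥ v) j
  rw [mulVec_mulVec, mulVec_mulVec, h]

theorem ModuleCat.hasProjectiveDimensionLE_succ_of_ker {R : Type u} [Ring R] {P M : Type u}
    [AddCommGroup P] [Module R P] [AddCommGroup M] [Module R M] [Module.Projective R P]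
    {f : P →ₗ[R] M} (hf : Function.Surjective f) {n : ℕ}
    (h : HasProjectiveDimensionLE (ModuleCat.of R f.ker) n) :
    HasProjectiveDimensionLE (ModuleCat.of R M) (n + 1) := by
  have hP : Projective (ModuleCat.of R P) := (IsProjective.iff_projective P).1 inferInstance
  exact ((LinearMap.shortExact_shortComplexKer hf).hasProjectiveDimensionLT_X₃_iff n hP).2 h

theorem hasProjectiveDimensionLE_range_mulVecBilin {m : ℕ → ℕ}
    {D : ∀ i, Matrix (Fin (m i)) (Fin (m (i + 1))) A}
    (hD : ∀ i, (mulVecBilin A Aᵐᵒᵖ (D (i + 1))).range = (mulVecBilin A Aᵐᵒᵖ (D i)).ker) (n i : ℕ)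
    (h : Module.Projective Aᵐᵒᵖ (mulVecBilin A Aᵐᵒᵖ (D (i + n))).range) :
    HasProjectiveDimensionLE (ModuleCat.of Aᵐᵒᵖ (mulVecBilin A Aᵐᵒᵖ (D i)).range) n := by
  induction n generalizing i with
  | zero =>
    have : Projective (ModuleCat.of Aᵐᵒᵖ (mulVecBilin A Aᵐᵒᵖ (D i)).range) :=
      (IsProjective.iff_projective _).1 h
    exact (projective_iff_hasProjectiveDimensionLE_zero _).1 this
  | succ n ih =>
    refine ModuleCat.hasProjectiveDimensionLE_succ_of_ker (LinearMap.surjective_rangeRestrict _) ?_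
    have := ih (i + 1) (by rwa [Nat.add_right_comm, Nat.add_assoc])
    rw [LinearMap.ker_rangeRestrict, ← hD i]
    exact this

theorem hasProjectiveDimensionLE_quotient_op [IsNoetherianRing Aᵐᵒᵖ] {n : ℕ}
    (h : ∀ X : ModuleCat.{u} A, HasProjectiveDimensionLE X n) (I : Ideal Aᵐᵒᵖ) :
    HasProjectiveDimensionLE (ModuleCat.of Aᵐᵒᵖ (Aᵐᵒᵖ ⧸ I)) (n + 1) := by
  let f : (Fin 1 → A) →ₗ[Aᵐᵒᵖ] Aᵐᵒᵖ ⧸ I :=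
    I.mkQ ∘ₗ (MulOpposite.opLinearEquiv Aᵐᵒᵖ : A ≃ₗ[Aᵐᵒᵖ] Aᵐᵒᵖ).toLinearMap ∘ₗ LinearMap.proj 0
  have hf : Function.Surjective f := fun y ↦ by
    obtain ⟨r, rfl⟩ := I.mkQ_surjective y
    exact ⟨fun _ ↦ r.unop, rfl⟩
  obtain ⟨m, D, ⟨e, he⟩, hD⟩ := exists_matrix_resolution f.ker
  have hmul (i : ℕ) : D i * D (i + 1) = 0 := by
    refine Matrix.ext_of_mulVec_single fun k ↦ ?_
    have : mulVecBilin A Aᵐᵒᵖ (D (i + 1)) (Pi.single k 1) ∈ (mulVecBilin A Aᵐᵒᵖ (D i)).ker :=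
      hD i ▸ LinearMap.mem_range_self _ _
    rw [← mulVec_mulVec, zero_mulVec]
    exact this
  have hex (i : ℕ) : (D i).ExactOn (D (i + 1)) A := fun x hx ↦
    (hD i ▸ (show x ∈ (mulVecBilin A Aᵐᵒᵖ (D i)).ker from hx) :
      x ∈ (mulVecBilin A Aᵐᵒᵖ (D (i + 1))).range)
  obtain ⟨W, hW⟩ := Matrix.ExactOn.exists_mul_mul_eq (hmul n) fun X _ _ ↦
    Matrix.ExactOn.of_hasProjectiveDimensionLE hmul hex n (ModuleCat.of A X) (h _)
  refine ModuleCat.hasProjectiveDimensionLE_succ_of_ker hf ?_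
  rw [he]
  have := hasProjectiveDimensionLE_range_mulVecBilin hD n 0
    (by rw [Nat.zero_add]; exact projective_range_mulVecBilin hW)
  exact ModuleCat.hasProjectiveDimensionLE_of_linearEquiv
    (M := ModuleCat.of Aᵐᵒᵖ (mulVecBilin A Aᵐᵒᵖ (D 0)).range)
    (e.submoduleMap (mulVecBilin A Aᵐᵒᵖ (D 0)).range) n

end RightModules

/-- If a ring `A` is left and right Noetherian and has finite left global dimension,
then its opposite ring has finite left global dimension as well (equivalently, `A` has
finite right global dimension). -/
theorem finiteGlobalDim_op_of_noetherian
    (A : Type u) [Ring A] [IsNoetherianRing A] [IsNoetherianRing Aᵐᵒᵖ]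
    (h : HasFiniteGlobalDim A) :
    HasFiniteGlobalDim Aᵐᵒᵖ := by
  obtain ⟨n, hn⟩ := h
  exact ⟨n + 1, fun M ↦ .of_hasProjectiveDimensionLE <| hasProjectiveDimensionLE_of_quotient _
    (hasProjectiveDimensionLE_quotient_op fun X ↦ (hn X).hasProjectiveDimensionLE) M⟩
end

section
/- Let K be a field and A an associative K-algebra. A is smooth over K (i.e. A is a perfect module over A^op ⊗_K A) if and only if A ⊗_K Kbar is smooth over the algebraic closure Kbar of K. -/
open CategoryTheory TensorProduct

universe u

/-- The diagonal bimodule structure: `A` as a module over its enveloping algebra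
`Aᵐᵒᵖ ⊗[K] A`, via `(op a ⊗ b) • x = b * x * a`. -/
noncomputable instance envModule (K A : Type u) [CommRing K] [Ring A] [Algebra K A] :
    Module (Aᵐᵒᵖ ⊗[K] A) A :=
  TensorProduct.Algebra.module (R := K) (A := Aᵐᵒᵖ) (B := A) (M := A)


/-- `A` is smooth over `K`: `A` is flat over `K` and perfect (of finite projective
dimension) as a module over the enveloping algebra `Aᵐᵒᵖ ⊗[K] A`. -/
def SmoothOver (K A : Type u) [CommRing K] [Ring A] [Algebra K A] : Prop :=
  Module.Flat K A ∧
    ∃ n : ℕ, HasProjDimLE (Aᵐᵒᵖ ⊗[K] A) (ModuleCat.of (Aᵐᵒᵖ ⊗[K] A) A) n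

attribute [local instance] Algebra.TensorProduct.rightAlgebra

universe v

section
open Limits
variable {C : Type u} [Category.{v} C] [Abelian C]

/-- A projective resolution vanishing in degrees `≥ n` bounds the projective dimension. -/
theorem CategoryTheory.ProjectiveResolution.hasProjectiveDimensionLT {X : C}
    (P : ProjectiveResolution X) {n : ℕ} (h : ∀ i, n ≤ i → IsZero (P.complex.X i)) :
    HasProjectiveDimensionLT X n := by
  let := HasExt.standard C
  rw [hasProjectiveDimensionLT_iff]
  intro i hi Y e
  obtain ⟨f, hf, rfl⟩ := P.extMk_surjective e (i + 1) rfl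
  obtain rfl : f = 0 := (h i hi).eq_of_src _ _
  simp

/-- A projective resolution of `X₁` extends along a short exact sequence with projective middle term
to a projective resolution of `X₃`, shifted by one. -/
theorem exists_projectiveResolution_of_shortExact {S : ShortComplex C} (hS : S.ShortExact)
    [Projective S.X₂] (Q : ProjectiveResolution S.X₁) :
    ∃ P : ProjectiveResolution S.X₃, ∀ i, P.complex.X (i + 1) = Q.complex.X i := by
  have := hS.mono_f
  have := hS.epi_g
  let q : Q.complex.X 0 ⟶ S.X₁ := Q.π.f 0
  have : Epi q := inferInstanceAs (Epi (Q.π.f 0))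
  have hq : Q.complex.d 1 0 ≫ q = 0 := Q.complex_d_comp_π_f_zero
  have hq' : (ShortComplex.mk _ _ hq).Exact :=
    ShortComplex.exact_of_g_is_cokernel _ Q.isColimitCokernelCofork
  have w : Q.complex.d 1 0 ≫ q ≫ S.f = 0 := by rw [reassoc_of% hq, zero_comp]
  let D := Q.complex.augment (q ≫ S.f) w
  have hD : D.d 1 0 ≫ S.g = 0 := by
    change (q ≫ S.f) ≫ S.g = 0
    rw [Category.assoc, S.zero, comp_zero]
  have ex0 : (ShortComplex.mk _ _ hD).Exact := by
    let α : ShortComplex.mk _ _ hD ⟶ S :=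
      { τ₁ := q
        τ₂ := 𝟙 _
        τ₃ := 𝟙 _
        comm₁₂ := by simp [D]
        comm₂₃ := (Category.id_comp _).trans (Category.comp_id _).symm }
    have : Epi α.τ₁ := this
    have : IsIso α.τ₂ := inferInstanceAs (IsIso (𝟙 _))
    have : Mono α.τ₃ := inferInstanceAs (Mono (𝟙 _))
    rw [ShortComplex.exact_iff_of_epi_of_isIso_of_mono α]
    exact hS.exact
  have exS : ∀ n, D.ExactAt (n + 1) := by
    intro n
    rw [HomologicalComplex.exactAt_iff' _ (n + 1 + 1) (n + 1) n (by simp) (by simp)]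
    rcases n with _ | n
    · let α : ShortComplex.mk _ _ hq ⟶ D.sc' 2 1 0 :=
        { τ₁ := 𝟙 _
          τ₂ := 𝟙 _
          τ₃ := S.f
          comm₁₂ := by simp [D, HomologicalComplex.sc', HomologicalComplex.shortComplexFunctor']
          comm₂₃ := by simp [D, HomologicalComplex.sc', HomologicalComplex.shortComplexFunctor'] }
      have : Epi α.τ₁ := inferInstanceAs (Epi (𝟙 _))
      have : IsIso α.τ₂ := inferInstanceAs (IsIso (𝟙 _))
      have : Mono α.τ₃ := inferInstanceAs (Mono S.f)
      exact (ShortComplex.exact_iff_of_epi_of_isIso_of_mono α).1 hq'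
    · exact Q.exact_succ n
  refine ⟨{ complex := D
            projective := ?_
            π := (ChainComplex.toSingle₀Equiv _ _).symm ⟨S.g, hD⟩
            quasiIso := ⟨fun n => ?_⟩ }, fun i => rfl⟩
  · rintro (_ | n)
    · assumption
    · exact Q.projective n
  · cases n
    · rw [ChainComplex.quasiIsoAt₀_iff, ShortComplex.quasiIso_iff_of_zeros']
      · refine (ShortComplex.exact_and_epi_g_iff_of_iso ?_).2 ⟨ex0, hS.epi_g⟩
        exact ShortComplex.isoMk (Iso.refl _) (Iso.refl _) (Iso.refl _)
          ((Category.id_comp _).trans (Category.comp_id _).symm)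
          (by
            have h := ChainComplex.toSingle₀Equiv_symm_apply_f_zero (C := D) S.g hD
            change 𝟙 S.X₂ ≫ S.g = HomologicalComplex.Hom.f
              ((ChainComplex.toSingle₀Equiv D S.X₃).symm ⟨S.g, hD⟩) 0 ≫ 𝟙 S.X₃
            erw [h, Category.id_comp, Category.comp_id])
      all_goals rfl
    · rw [quasiIsoAt_iff_exactAt']
      · apply exS
      · apply ChainComplex.exactAt_succ_single_obj

/-- An object of projective dimension at most `n` has a projective resolution of length `n`. -/
theorem exists_projectiveResolution [EnoughProjectives C] (n : ℕ) (X : C)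
    [HasProjectiveDimensionLT X (n + 1)] :
    ∃ P : ProjectiveResolution X, ∀ i, n < i → IsZero (P.complex.X i) := by
  induction n generalizing X with
  | zero =>
    have : Projective X := projective_iff_hasProjectiveDimensionLT_one.2 ‹_›
    exact ⟨.self X, fun i hi ↦ HomologicalComplex.isZero_single_obj_X _ _ _ _ hi.ne'⟩
  | succ n ih =>
    let S := ShortComplex.mk (kernel.ι (Projective.π X)) (Projective.π X) (kernel.condition _)
    have hS : S.ShortExact := { exact := ShortComplex.exact_kernel _ }
    have : Projective S.X₂ := inferInstanceAs (Projective (Projective.over X))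
    have := (hS.hasProjectiveDimensionLT_X₃_iff n ‹_›).1 ‹_›
    obtain ⟨Q, hQ⟩ := ih S.X₁
    obtain ⟨P, hP⟩ := exists_projectiveResolution_of_shortExact hS Q
    refine ⟨P, fun i hi ↦ ?_⟩
    obtain ⟨i, rfl⟩ := Nat.exists_eq_succ_of_ne_zero (by lia : i ≠ 0)
    rw [Nat.succ_eq_add_one, hP]
    exact hQ i (by lia)

end

section
variable {R S : Type u} [Ring R] [Ring S]

/-- If `S` is projective over `R`, every projective `S`-module is projective over `R`. -/
theorem Module.Projective.restrictScalars_of_projective [Module R S] [IsScalarTower R S S]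
    [Module.Projective R S]
    (P : Type*) [AddCommGroup P] [Module R P] [Module S P] [IsScalarTower R S P]
    [Module.Projective S P] : Module.Projective R P := by
  classical
  have : Module.Projective R (P →₀ S) := .of_equiv' (finsuppLequivDFinsupp R).symm
  obtain ⟨s, hs⟩ := Module.projective_def'.1 ‹Module.Projective S P›
  exact Module.Projective.of_split (s.restrictScalars R)
    ((Finsupp.linearCombination S id).restrictScalars R) (by ext x; exact congr($hs x))

/-- Restriction along `φ : R →+* S` with `S` projective over `R` does not increase the projective
dimension. -/
theorem hasProjectiveDimensionLE_restrictScalars (φ : R →+* S)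
    (h : Projective ((ModuleCat.restrictScalars φ).obj (.of S S))) (n : ℕ) (N : ModuleCat.{u} S)
    [HasProjectiveDimensionLE N n] :
    HasProjectiveDimensionLE ((ModuleCat.restrictScalars φ).obj N) n := by
  have key (P : ModuleCat.{u} S) (hP : Projective P) :
      Projective ((ModuleCat.restrictScalars φ).obj P) := by
    rw [← IsProjective.iff_projective] at hP h ⊢
    let := Module.compHom S φ
    let := Module.compHom P φ
    have : IsScalarTower R S S := ⟨fun a b c ↦ mul_assoc (φ a) b c⟩
    have : IsScalarTower R S P := ⟨fun a b c ↦ mul_smul (φ a) b c⟩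
    have : Module.Projective R S := h
    exact Module.Projective.restrictScalars_of_projective (R := R) (S := S) P
  induction n generalizing N with
  | zero =>
    rw [← projective_iff_hasProjectiveDimensionLE_zero] at *
    exact key _ ‹_›
  | succ n ih =>
    have hS := N.shortExact_projectiveShortComplex
    have := (hS.hasProjectiveDimensionLT_X₃_iff n inferInstance).mp ‹_›
    have hS' : (N.projectiveShortComplex.map (ModuleCat.restrictScalars φ)).ShortExact :=
      ModuleCat.shortComplex_shortExact _
        ((ShortComplex.ShortExact.moduleCat_exact_iff_function_exact
          N.projectiveShortComplex).1 hS.exact)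
        hS.moduleCat_injective_f hS.moduleCat_surjective_g
    exact (hS'.hasProjectiveDimensionLT_X₃_iff n (key _ inferInstance)).mpr (ih _)

attribute [local instance] RingHomInvPair.of_ringEquiv in
/-- Projective dimension is invariant under transport along a ring isomorphism. -/
theorem hasProjectiveDimensionLE_iff_of_ringEquiv (e : R ≃+* S) {M : Type u} [AddCommGroup M]
    [Module R M] [Module S M] (h : ∀ (r : R) (x : M), e r • x = r • x) (n : ℕ) :
    HasProjectiveDimensionLE (ModuleCat.of R M) n ↔
      HasProjectiveDimensionLE (ModuleCat.of S M) n := by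
  let e₁ : ModuleCat.of R M ≃ₛₗ[RingHomClass.toRingHom e] ModuleCat.of S M :=
    { AddEquiv.refl M with map_smul' r x := (h r x).symm }
  let e₂ : ModuleCat.of S M ≃ₛₗ[RingHomClass.toRingHom e.symm] ModuleCat.of R M :=
    { AddEquiv.refl M with
      map_smul' s x := by simpa using h (e.symm s) x }
  exact ⟨fun _ ↦ ModuleCat.hasProjectiveDimensionLE_of_semiLinearEquiv e e₁ n,
    fun _ ↦ ModuleCat.hasProjectiveDimensionLE_of_semiLinearEquiv e.symm e₂ n⟩

end

theorem hasProjDimLE_iff {R : Type u} [Ring R] (M : ModuleCat.{u} R) (n : ℕ) :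
    HasProjDimLE R M n ↔ HasProjectiveDimensionLE M n :=
  ⟨fun ⟨P, hP⟩ ↦ P.hasProjectiveDimensionLT hP, fun _ ↦ exists_projectiveResolution n M⟩

section
variable {K R L M N : Type u} [Field K] [Ring R] [Algebra K R] [Field L] [Algebra K L]
  [AddCommGroup M] [Module K M] [Module R M] [IsScalarTower K R M]
  [AddCommGroup N] [Module K N] [Module R N] [IsScalarTower K R N]

variable (K R L M) in
/-- `M ⊗[K] L` as a module over `R ⊗[K] L`. -/
noncomputable abbrev tensorModule : Module (R ⊗[K] L) (M ⊗[K] L) :=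
  Module.compHom (M ⊗[K] L)
    ((Module.endTensorEndAlgHom (R := K) (S := K) (A := K) (M := M) (N := L)).comp
      (Algebra.TensorProduct.map (Algebra.lsmul K K M) (Algebra.lsmul K K L))).toRingHom

attribute [local instance] tensorModule

theorem tensorModule_smul (r : R) (l : L) (m : M) (x : L) :
    (r ⊗ₜ[K] l) • (m ⊗ₜ[K] x) = (r • m) ⊗ₜ[K] (l * x) := rfl

/-- The base change of an `R`-linear map, as an `R ⊗[K] L`-linear map. -/
noncomputable def rTensorMap (f : M →ₗ[R] N) : M ⊗[K] L →ₗ[R ⊗[K] L] N ⊗[K] L where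
  __ := (f.restrictScalars K).rTensor L
  map_smul' t x := by
    induction t with
    | zero => simp
    | add a b ha hb => simp_all [add_smul]
    | tmul r l =>
      induction x with
      | zero => simp
      | add a b ha hb => simp_all [smul_add]
      | tmul m y => simp [tensorModule_smul]

theorem rTensorMap_exact {P : Type u} [AddCommGroup P] [Module K P] [Module R P]
    [IsScalarTower K R P] (f : M →ₗ[R] N) (g : N →ₗ[R] P) (h : Function.Exact f g)
    (hg : Function.Surjective g) :
    Function.Exact (rTensorMap (K := K) (L := L) f) (rTensorMap (K := K) (L := L) g) :=
  _root_.rTensor_exact (R := K) (f := f.restrictScalars K) (g := g.restrictScalars K) L h hg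

theorem rTensorMap_injective (f : M →ₗ[R] N) (h : Function.Injective f) :
    Function.Injective (rTensorMap (K := K) (L := L) f) :=
  Module.Flat.rTensor_preserves_injective_linearMap (f.restrictScalars K) h

theorem rTensorMap_surjective (f : M →ₗ[R] N) (h : Function.Surjective f) :
    Function.Surjective (rTensorMap (K := K) (L := L) f) :=
  LinearMap.rTensor_surjective L (g := f.restrictScalars K) h

/-- If `M` is projective over `R`, then `M ⊗[K] L` is projective over `R ⊗[K] L`. -/
theorem projective_tensor [Module.Projective R M] :
    Module.Projective (R ⊗[K] L) (M ⊗[K] L) := by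
  refine Module.Projective.of_lifting_property fun {X Y} _ _ _ _ f g hf ↦ ?_
  let e : R →ₐ[K] R ⊗[K] L := Algebra.TensorProduct.includeLeft
  let : Module K X := Module.compHom X (algebraMap K (R ⊗[K] L))
  have : IsScalarTower K (R ⊗[K] L) X := .of_algebraMap_smul fun _ _ ↦ rfl
  let : Module R X := Module.compHom X e.toRingHom
  let : Module R Y := Module.compHom Y e.toRingHom
  have hX (r : R) (x : X) : r • x = e r • x := rfl
  have : IsScalarTower K R X := .of_algebraMap_smul fun k x ↦ by
    rw [hX, e.commutes, algebraMap_smul]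
  let f' : X →ₗ[R] Y := { f with map_smul' := fun r x ↦ f.map_smul (e r) x }
  let g' : M →ₗ[R] Y :=
    { toFun := fun m ↦ g (m ⊗ₜ 1)
      map_add' := fun _ _ ↦ by rw [add_tmul, map_add]
      map_smul' := fun r m ↦ by
        rw [show (r • m) ⊗ₜ[K] (1 : L) = e r • (m ⊗ₜ[K] 1) by simp [e, tensorModule_smul]]
        exact g.map_smul _ _ }
  obtain ⟨h, hh⟩ := Module.projective_lifting_property f' g' hf
  replace hh (m : M) : f (h m) = g (m ⊗ₜ 1) := congr($hh m)
  let φ : M ⊗[K] L →ₗ[K] X := TensorProduct.lift <| LinearMap.mk₂ K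
    (fun m l ↦ ((1 : R) ⊗ₜ[K] l) • h m) (by simp)
    (fun k m l ↦ by
      rw [← algebraMap_smul R k m, h.map_smul, algebraMap_smul, smul_comm])
    (by simp [tmul_add, add_smul]) (by simp)
  have hφ (m : M) (l : L) : φ (m ⊗ₜ l) = ((1 : R) ⊗ₜ[K] l) • h m := rfl
  let ψ : M ⊗[K] L →ₗ[R ⊗[K] L] X :=
    { φ with
      map_smul' := fun t x ↦ by
        change φ (t • x) = t • φ x
        induction t with
        | zero => simp
        | add a b ha hb => rw [add_smul, map_add, ha, hb, add_smul]
        | tmul r l =>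
          induction x with
          | zero => simp
          | add a b ha hb => rw [smul_add, map_add, ha, hb, map_add, smul_add]
          | tmul m y =>
            rw [tensorModule_smul, hφ, hφ, h.map_smul, hX, smul_smul, smul_smul]
            simp [e] }
  have hψ (m : M) (l : L) : ψ (m ⊗ₜ l) = ((1 : R) ⊗ₜ[K] l) • h m := rfl
  refine ⟨ψ, LinearMap.ext fun x ↦ ?_⟩
  induction x with
  | zero => simp
  | add a b ha hb => rw [map_add, ha, hb, map_add]
  | tmul m l =>
    rw [LinearMap.comp_apply, hψ, map_smul, hh, ← map_smul, tensorModule_smul, one_smul, mul_one]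

theorem rTensorMap_shortExact {P : Type u} [AddCommGroup P] [Module K P] [Module R P]
    [IsScalarTower K R P] (f : M →ₗ[R] N) (g : N →ₗ[R] P) (hf : Function.Injective f)
    (h : Function.Exact f g) (hg : Function.Surjective g) :
    (ModuleCat.shortComplexOfCompEqZero (rTensorMap (K := K) (L := L) f)
      (rTensorMap (K := K) (L := L) g)
      (rTensorMap_exact f g h hg).linearMap_comp_eq_zero).ShortExact :=
  ModuleCat.shortComplex_shortExact _ (rTensorMap_exact f g h hg) (rTensorMap_injective f hf)
    (rTensorMap_surjective g hg)

/-- A module of projective dimension at most `n + 1` is the cokernel of an injection from a module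
of projective dimension at most `n` into a projective module. -/
theorem exists_projective_presentation {Q : Type u} [AddCommGroup Q] [Module R Q] {n : ℕ}
    [HasProjectiveDimensionLE (ModuleCat.of R Q) (n + 1)] :
    ∃ (N P : Type u) (_ : AddCommGroup N) (_ : Module K N) (_ : Module R N)
      (_ : IsScalarTower K R N) (_ : AddCommGroup P) (_ : Module K P) (_ : Module R P)
      (_ : IsScalarTower K R P) (f : N →ₗ[R] P) (g : P →ₗ[R] Q),
      Module.Projective R P ∧ Function.Injective f ∧ Function.Exact f g ∧ Function.Surjective g ∧
        HasProjectiveDimensionLE (ModuleCat.of R N) n := by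
  let g : (Q →₀ R) →ₗ[R] Q := Finsupp.linearCombination R id
  have hg : Function.Surjective g := Finsupp.linearCombination_id_surjective R Q
  have hS := LinearMap.shortExact_shortComplexKer hg
  have hP : Projective (ModuleCat.of R (Q →₀ R)) :=
    (IsProjective.iff_projective _).1 inferInstance
  have := (hS.hasProjectiveDimensionLT_X₃_iff n hP).mp ‹_›
  exact ⟨g.ker, Q →₀ R, _, inferInstance, _, inferInstance, _, inferInstance, _, inferInstance,
    g.ker.subtype, g, inferInstance, g.ker.injective_subtype, LinearMap.exact_subtype_ker_map g,
    hg, this⟩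

/-- Base change along a field extension does not increase the projective dimension. -/
theorem hasProjectiveDimensionLE_tensor (n : ℕ) [HasProjectiveDimensionLE (ModuleCat.of R M) n] :
    HasProjectiveDimensionLE (ModuleCat.of (R ⊗[K] L) (M ⊗[K] L)) n := by
  induction n generalizing M with
  | zero =>
    rw [← projective_iff_hasProjectiveDimensionLE_zero, ← IsProjective.iff_projective] at *
    exact projective_tensor
  | succ n ih =>
    obtain ⟨N, P, _, _, _, _, _, _, _, _, f, g, _, hf, hfg, hg, _⟩ :=
      exists_projective_presentation (K := K) (R := R) (Q := M) (n := n)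
    exact ((rTensorMap_shortExact f g hf hfg hg).hasProjectiveDimensionLT_X₃_iff n
      ((IsProjective.iff_projective _).1 projective_tensor)).mpr ih

variable (L) in
/-- The projective dimension can be detected after base change along a field extension. -/
theorem hasProjectiveDimensionLE_of_tensor (n : ℕ)
    [HasProjectiveDimensionLE (ModuleCat.of (R ⊗[K] L) (M ⊗[K] L)) n] :
    HasProjectiveDimensionLE (ModuleCat.of R M) n := by
  let φ : R →+* R ⊗[K] L := (Algebra.TensorProduct.includeLeft : R →ₐ[K] R ⊗[K] L)
  have hφ : Projective ((ModuleCat.restrictScalars φ).obj (.of (R ⊗[K] L) (R ⊗[K] L))) := by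
    rw [← IsProjective.iff_projective]
    let e : R ⊗[K] L ≃ₗ[R]
        (ModuleCat.restrictScalars φ).obj (.of (R ⊗[K] L) (R ⊗[K] L)) :=
      { AddEquiv.refl (R ⊗[K] L) with
        map_smul' r x := by
          change r • x = (r ⊗ₜ[K] (1 : L)) * x
          induction x with
          | zero => rw [smul_zero, mul_zero]
          | add x y hx hy => rw [smul_add, hx, hy, mul_add]
          | tmul s l => rw [smul_tmul', Algebra.TensorProduct.tmul_mul_tmul, one_mul, smul_eq_mul] }
    exact .of_equiv e
  have := hasProjectiveDimensionLE_restrictScalars φ hφ n (.of (R ⊗[K] L) (M ⊗[K] L))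
  obtain ⟨ρ, hρ⟩ := (Algebra.linearMap K L).exists_leftInverse_of_injective
    (LinearMap.ker_eq_bot.2 (algebraMap K L).injective)
  replace hρ : ρ 1 = 1 := by simpa using congr($hρ 1)
  let σ : M ⊗[K] L →ₗ[K] M := TensorProduct.rid K M ∘ₗ ρ.lTensor M
  have hσ (m : M) (l : L) : σ (m ⊗ₜ l) = ρ l • m := rfl
  let X := (ModuleCat.restrictScalars φ).obj (.of (R ⊗[K] L) (M ⊗[K] L))
  let i : ModuleCat.of R M ⟶ X := ModuleCat.ofHom (Y := X)
    { toFun m := m ⊗ₜ[K] (1 : L)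
      map_add' _ _ := add_tmul _ _ _
      map_smul' r m := by
        change _ = (r ⊗ₜ[K] (1 : L)) • (m ⊗ₜ[K] (1 : L))
        rw [tensorModule_smul, one_mul] }
  let p : X ⟶ ModuleCat.of R M := ModuleCat.ofHom (X := X)
    { toFun := σ
      map_add' := σ.map_add
      map_smul' r x := by
        change M ⊗[K] L at x
        change σ ((r ⊗ₜ[K] (1 : L)) • x) = r • σ x
        induction x with
        | zero => rw [smul_zero, map_zero, smul_zero]
        | add x y hx hy => rw [smul_add, map_add, hx, hy, map_add, smul_add]
        | tmul m l => rw [tensorModule_smul, one_mul, hσ, hσ, smul_comm] }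
  have hip : i ≫ p = 𝟙 _ := by
    ext m
    change σ (m ⊗ₜ 1) = m
    rw [hσ, hρ, one_smul]
  exact Retract.hasProjectiveDimensionLT { i := i, r := p, retract := hip : Retract _ X } (n + 1)

end

section
attribute [local instance] tensorModule
variable (K L A : Type u) [Field K] [Field L] [Algebra K L] [Ring A] [Algebra K A]
open MulOpposite Algebra.TensorProduct
/-- Additive maps out of a tensor product agree if they agree on pure tensors. -/
theorem TensorProduct.addHom_ext {R M N P : Type*} [CommSemiring R] [AddCommMonoid M]
    [AddCommMonoid N]
    [Module R M] [Module R N] [AddCommMonoid P] {f g : M ⊗[R] N →+ P}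
    (h : ∀ m n, f (m ⊗ₜ n) = g (m ⊗ₜ n)) : f = g := by
  ext x
  induction x with
  | zero => simp
  | add x y hx hy => simp [*]
  | tmul x y => exact h x y

theorem isScalarTower_self_left (R B : Type*) [CommSemiring R] [Semiring B] [Algebra R B] :
    IsScalarTower R R B := inferInstance

theorem commute_map_zero {F B C : Type*} [Semiring B] [Semiring C] [FunLike F B C]
    [RingHomClass F B C] (f : F) (c : C) : Commute c (f 0) := by
  rw [map_zero]
  exact .zero_right c

/-- The comparison map from the base change of the enveloping algebra of `A` to the enveloping algebra
of the base change. -/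
noncomputable def toEnv : (Aᵐᵒᵖ ⊗[K] A) ⊗[K] L →ₐ[K] (A ⊗[K] L)ᵐᵒᵖ ⊗[L] (A ⊗[K] L) :=
  Algebra.TensorProduct.lift
    (Algebra.TensorProduct.lift
      (((includeLeft : (A ⊗[K] L)ᵐᵒᵖ →ₐ[L] (A ⊗[K] L)ᵐᵒᵖ ⊗[L] (A ⊗[K] L)).restrictScalars K).comp
        (AlgHom.op (includeLeft : A →ₐ[K] A ⊗[K] L)))
      (((includeRight : (A ⊗[K] L) →ₐ[L] (A ⊗[K] L)ᵐᵒᵖ ⊗[L] (A ⊗[K] L)).restrictScalars K).comp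
        (includeLeft : A →ₐ[K] A ⊗[K] L))
      (fun a b ↦ (commute_iff_eq _ _).2 (by simp)))
    (IsScalarTower.toAlgHom K L _)
    (fun a b ↦ by
      rw [IsScalarTower.coe_toAlgHom']
      exact Algebra.commute_algebraMap_right _ _)

theorem toEnv_tmul (a b : A) (l : L) : toEnv K L A ((op a ⊗ₜ b) ⊗ₜ l) =
    op (a ⊗ₜ 1) ⊗ₜ (b ⊗ₜ l) := by
  have : (algebraMap L ((A ⊗[K] L)ᵐᵒᵖ ⊗[L] (A ⊗[K] L)) l) = 1 ⊗ₜ (1 ⊗ₜ l) := by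
    rw [Algebra.algebraMap_eq_smul_one, one_def, ← tmul_smul]
    congr 1
    rw [← Algebra.algebraMap_eq_smul_one]
    rfl
  unfold toEnv
  rw [lift_tmul, lift_tmul]
  simp [this]

/-- The restriction of `ofEnv` to the right tensor factor. -/
noncomputable def ofEnvRight : A ⊗[K] L →ₐ[L] (Aᵐᵒᵖ ⊗[K] A) ⊗[K] L :=
  { Algebra.TensorProduct.map (includeRight : A →ₐ[K] Aᵐᵒᵖ ⊗[K] A) (AlgHom.id K L) with
    commutes' := fun l ↦ by simp [right_algebraMap_apply, one_def] }

/-- The restriction of `ofEnv` to the left tensor factor. -/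
noncomputable def ofEnvLeft : (A ⊗[K] L)ᵐᵒᵖ →ₐ[L] (Aᵐᵒᵖ ⊗[K] A) ⊗[K] L :=
  { (Algebra.TensorProduct.map (includeLeft : Aᵐᵒᵖ →ₐ[K] Aᵐᵒᵖ ⊗[K] A)
      ((AlgEquiv.toOpposite K L).symm : Lᵐᵒᵖ →ₐ[K] L)).comp
      (opAlgEquiv K K A L).symm.toAlgHom with
    commutes' := fun l ↦ by
      simp [right_algebraMap_apply, one_def] }

theorem ofEnvRight_tmul (b : A) (l : L) : ofEnvRight K L A (b ⊗ₜ l) = (1 ⊗ₜ b) ⊗ₜ l := rfl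

theorem ofEnvLeft_op_tmul (a : A) (l : L) :
    ofEnvLeft K L A (op (a ⊗ₜ l)) = (op a ⊗ₜ 1) ⊗ₜ l := rfl

/-- The inverse of `toEnv`. -/
noncomputable def ofEnv : (A ⊗[K] L)ᵐᵒᵖ ⊗[L] (A ⊗[K] L) →ₐ[L] (Aᵐᵒᵖ ⊗[K] A) ⊗[K] L :=
  have : IsScalarTower L L ((Aᵐᵒᵖ ⊗[K] A) ⊗[K] L) := isScalarTower_self_left L _
  Algebra.TensorProduct.lift (ofEnvLeft K L A) (ofEnvRight K L A) fun x y ↦ by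
    induction x using MulOpposite.rec' with | _ x
    induction x with
    | zero => exact (commute_map_zero (ofEnvLeft K L A) _).symm
    | add a b ha hb => rw [MulOpposite.op_add, map_add]; exact Commute.add_left ha hb
    | tmul a l =>
      induction y with
      | zero => exact commute_map_zero (ofEnvRight K L A) _
      | add a b ha hb => rw [map_add]; exact Commute.add_right ha hb
      | tmul b m =>
        simp [ofEnvLeft_op_tmul, ofEnvRight_tmul, Commute, SemiconjBy, mul_comm l m]

theorem ofEnv_tmul (a b : A) (l m : L) :
    ofEnv K L A (op (a ⊗ₜ l) ⊗ₜ (b ⊗ₜ m)) = (op a ⊗ₜ b) ⊗ₜ (l * m) := by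
  simp [ofEnv, ofEnvLeft_op_tmul, ofEnvRight_tmul]

/-- The enveloping algebra commutes with base change. -/
noncomputable def envEquiv :
    (Aᵐᵒᵖ ⊗[K] A) ⊗[K] L ≃+* (A ⊗[K] L)ᵐᵒᵖ ⊗[L] (A ⊗[K] L) where
  __ := (toEnv K L A).toRingHom
  invFun := ofEnv K L A
  left_inv x := by
    change ofEnv K L A (toEnv K L A x) = x
    induction x with
    | zero => simp
    | add a b ha hb => rw [map_add, map_add, ha, hb]
    | tmul x l =>
      induction x with
      | zero => simp
      | add a b ha hb => rw [add_tmul, map_add, map_add, ha, hb]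
      | tmul a b =>
        induction a using MulOpposite.rec' with | _ a
        rw [toEnv_tmul, ofEnv_tmul, one_mul]
  right_inv x := by
    change toEnv K L A (ofEnv K L A x) = x
    induction x with
    | zero => simp
    | add a b ha hb => rw [map_add, map_add, ha, hb]
    | tmul x y =>
      induction x using MulOpposite.rec' with | _ x
      induction x with
      | zero => simp
      | add a b ha hb => rw [MulOpposite.op_add, add_tmul, map_add, map_add, ha, hb]
      | tmul a l =>
        induction y with
        | zero => simp
        | add a b ha hb => rw [tmul_add, map_add, map_add, ha, hb]
        | tmul b m =>
          have h₁ : b ⊗ₜ[K] (l * m) = l • (b ⊗ₜ[K] m) := by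
            rw [Algebra.smul_def, right_algebraMap_apply, tmul_mul_tmul, one_mul]
          have h₂ : op (a ⊗ₜ[K] l) = l • op (a ⊗ₜ[K] (1 : L)) := by
            rw [← MulOpposite.op_smul, Algebra.smul_def, right_algebraMap_apply, tmul_mul_tmul,
              one_mul, mul_one]
          rw [ofEnv_tmul, toEnv_tmul, h₁, h₂, smul_tmul]
variable {K L A}

instance isScalarTower_envModule : IsScalarTower K (Aᵐᵒᵖ ⊗[K] A) A where
  smul_assoc k t x := by
    let f : Aᵐᵒᵖ ⊗[K] A →+ A := (smulAddHom (Aᵐᵒᵖ ⊗[K] A) A).flip x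
    let g : A →+ A := DistribSMul.toAddMonoidHom A k
    let g' : Aᵐᵒᵖ ⊗[K] A →+ Aᵐᵒᵖ ⊗[K] A := DistribSMul.toAddMonoidHom _ k
    refine DFunLike.congr_fun (TensorProduct.addHom_ext (f := f.comp g') (g := g.comp f)
      fun a b ↦ ?_) t
    change (k • (a ⊗ₜ[K] b)) • x = k • (a ⊗ₜ[K] b) • x
    rw [smul_tmul', TensorProduct.Algebra.smul_def, TensorProduct.Algebra.smul_def, smul_assoc]

theorem toEnv_smul (t : (Aᵐᵒᵖ ⊗[K] A) ⊗[K] L) (x : A ⊗[K] L) :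
    toEnv K L A t • x = t • x := by
  induction x with
  | zero => rw [smul_zero, smul_zero]
  | add x y hx hy => rw [smul_add, hx, hy, smul_add]
  | tmul c m =>
    let f : (Aᵐᵒᵖ ⊗[K] A) ⊗[K] L →+ A ⊗[K] L :=
      ((smulAddHom ((A ⊗[K] L)ᵐᵒᵖ ⊗[L] (A ⊗[K] L)) (A ⊗[K] L)).flip (c ⊗ₜ m)).comp
        (toEnv K L A : _ →+ _)
    let g : (Aᵐᵒᵖ ⊗[K] A) ⊗[K] L →+ A ⊗[K] L :=
      (smulAddHom ((Aᵐᵒᵖ ⊗[K] A) ⊗[K] L) (A ⊗[K] L)).flip (c ⊗ₜ m)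
    refine DFunLike.congr_fun (TensorProduct.addHom_ext (f := f) (g := g) fun r l ↦ ?_) t
    let i : Aᵐᵒᵖ ⊗[K] A →+ (Aᵐᵒᵖ ⊗[K] A) ⊗[K] L :=
      (TensorProduct.mk K (Aᵐᵒᵖ ⊗[K] A) L).flip l
    refine DFunLike.congr_fun (TensorProduct.addHom_ext (f := f.comp i) (g := g.comp i)
      fun a b ↦ ?_) r
    change toEnv K L A ((a ⊗ₜ b) ⊗ₜ l) • (c ⊗ₜ[K] m) = ((a ⊗ₜ[K] b) ⊗ₜ[K] l) • (c ⊗ₜ[K] m)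
    induction a using MulOpposite.rec' with | _ a
    rw [toEnv_tmul, tensorModule_smul, TensorProduct.Algebra.smul_def,
      TensorProduct.Algebra.smul_def]
    simp

theorem hasProjectiveDimensionLE_enveloping_iff (n : ℕ) :
    HasProjectiveDimensionLE (ModuleCat.of ((Aᵐᵒᵖ ⊗[K] A) ⊗[K] L) (A ⊗[K] L)) n ↔
      HasProjectiveDimensionLE
        (ModuleCat.of ((A ⊗[K] L)ᵐᵒᵖ ⊗[L] (A ⊗[K] L)) (A ⊗[K] L)) n :=
  hasProjectiveDimensionLE_iff_of_ringEquiv (envEquiv K L A) toEnv_smul n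

end

attribute [local instance] tensorModule
/-- A `K`-algebra `A` is smooth over `K` if and only if `A ⊗[K] Kbar` is smooth over the
algebraic closure `Kbar` of `K`. -/
theorem smoothOver_iff_baseChange_algebraicClosure
    (K A : Type u) [Field K] [Ring A] [Algebra K A] :
    SmoothOver K A ↔
      SmoothOver (AlgebraicClosure K) (A ⊗[K] AlgebraicClosure K) := by
  let L := AlgebraicClosure K
  constructor
  · rintro ⟨_, n, h⟩
    rw [hasProjDimLE_iff] at h
    have := (hasProjectiveDimensionLE_enveloping_iff (K := K) (L := L) (A := A) n).1
      (hasProjectiveDimensionLE_tensor n)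
    exact ⟨inferInstance, n, (hasProjDimLE_iff _ _).2 this⟩
  · rintro ⟨_, n, h⟩
    rw [hasProjDimLE_iff] at h
    have := (hasProjectiveDimensionLE_enveloping_iff (K := K) (L := L) (A := A) n).2 h
    exact ⟨inferInstance, n,
      (hasProjDimLE_iff _ _).2 (hasProjectiveDimensionLE_of_tensor (K := K) L n)⟩
end

section
/- Grothendieck's generic freeness lemma: Let R be a Noetherian integral domain, T a finitely generated commutative R-algebra, and M a finitely generated T-module. Then there exists a nonzero f ∈ R such that the localization M_f is a free R_f-module. -/
universe u

section FreeFiltration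

variable {A M : Type*} [CommRing A] [AddCommGroup M] [Module A M]

/-- A module with an exhaustive increasing filtration starting at zero, all of whose successive
quotients are free, is free. -/
lemma Module.Free.of_filtration (F : ℕ → Submodule A M) (h0 : F 0 = ⊥) (hF : Monotone F)
    (htop : ⨆ i, F i = ⊤) (Q : ℕ → Type*) [∀ i, AddCommGroup (Q i)] [∀ i, Module A (Q i)]
    [∀ i, Module.Free A (Q i)] (q : ∀ i, F (i + 1) →ₗ[A] Q i)
    (hq : ∀ i, Function.Surjective (q i))
    (hker : ∀ i (x : F (i + 1)), q i x = 0 ↔ (x : M) ∈ F i) : Module.Free A M := by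
  classical
  choose s hs using fun i ↦ Module.projective_lifting_property (q i) LinearMap.id (hq i)
  replace hs : ∀ i x, q i (s i x) = x := fun i x ↦ LinearMap.congr_fun (hs i) x
  let Φ : (Π₀ i, Q i) →ₗ[A] M := DFinsupp.lsum ℕ fun i ↦ (F (i + 1)).subtype ∘ₗ s i
  have hΦ : ∀ i x, Φ (DFinsupp.single i x) = s i x := fun i x ↦ by simp [Φ]
  have hmem : ∀ n (x : Π₀ i, Q i), (∀ i, n ≤ i → x i = 0) → Φ x ∈ F n := by
    intro n x hx
    rw [← DFinsupp.sum_single (f := x), DFinsupp.sum, map_sum]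
    refine Submodule.sum_mem _ fun i hi ↦ ?_
    rw [hΦ]
    refine hF (Nat.succ_le_of_lt ?_) (s i (x i)).2
    by_contra! h
    exact (DFinsupp.mem_support_iff.mp hi) (hx i h)
  have hinj : ∀ n (x : Π₀ i, Q i), (∀ i, n ≤ i → x i = 0) → Φ x = 0 → x = 0 := by
    intro n
    induction n with
    | zero => exact fun x hx _ ↦ DFinsupp.ext fun i ↦ hx i i.zero_le
    | succ n ih =>
      intro x hx h
      have hsplit := DFinsupp.single_add_erase n x
      have herase : Φ (x.erase n) ∈ F n := hmem n _ fun i hi ↦ by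
        obtain rfl | hne := eq_or_ne i n
        · simp
        · rw [DFinsupp.erase_ne hne]
          exact hx i (by omega)
      have hsum : (s n (x n) : M) + Φ (x.erase n) = 0 := by
        rw [← hΦ, ← map_add, hsplit, h]
      have hxn : x n = 0 := by
        rw [← hs n (x n), hker, eq_neg_of_add_eq_zero_left hsum]
        exact neg_mem herase
      refine ih x (fun i hi ↦ ?_) h
      obtain rfl | hne := eq_or_ne i n
      · exact hxn
      · exact hx i (by omega)
  have hsurj : ∀ n, F n ≤ LinearMap.range Φ := by
    intro n
    induction n with
    | zero => simp [h0]
    | succ n ih =>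
      intro m hm
      have hdiff : m - s n (q n ⟨m, hm⟩) ∈ F n := by
        have := (hker n (⟨m, hm⟩ - s n (q n ⟨m, hm⟩))).mp (by rw [map_sub, hs, sub_self])
        simpa using this
      rw [← sub_add_cancel m (s n (q n ⟨m, hm⟩) : M)]
      exact add_mem (ih hdiff) ⟨_, hΦ n _⟩
  refine Module.Free.of_equiv (LinearEquiv.ofBijective Φ ⟨?_, ?_⟩)
  · rw [injective_iff_map_eq_zero]
    intro x hx
    refine hinj (x.support.sup id + 1) x (fun i hi ↦ ?_) hx
    by_contra h
    have := Finset.le_sup (f := id) (DFinsupp.mem_support_iff.mpr h)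
    simp only [id] at this
    omega
  · rw [← LinearMap.range_eq_top, eq_top_iff, ← htop]
    exact iSup_le hsurj

end FreeFiltration

section LocalizedFree

variable {R M N : Type*} [CommRing R] [AddCommGroup M] [Module R M] [AddCommGroup N] [Module R N]

/-- The localization of `M` away from `f` is free. -/
def IsFreeAway (f : R) (M : Type*) [AddCommGroup M] [Module R M] : Prop :=
  Module.Free (Localization.Away f) (LocalizedModule (Submonoid.powers f) M)

/-- `M` becomes free after inverting any nonzero multiple of a suitable nonzero element. -/
def IsGenericallyFree (R M : Type*) [CommRing R] [AddCommGroup M] [Module R M] : Prop :=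
  ∃ f : R, f ≠ 0 ∧ ∀ g : R, g ≠ 0 → f ∣ g → IsFreeAway g M

lemma IsFreeAway.of_equiv {f : R} (e : M ≃ₗ[R] N) (h : IsFreeAway f M) : IsFreeAway f N :=
  have : Module.Free (Localization.Away f) (LocalizedModule (Submonoid.powers f) M) := h
  Module.Free.of_equiv (IsLocalizedModule.mapEquiv (Submonoid.powers f)
    (LocalizedModule.mkLinearMap (Submonoid.powers f) M)
    (LocalizedModule.mkLinearMap (Submonoid.powers f) N) (Localization.Away f) e)

open TensorProduct in
lemma isFreeAway_iff_tensorProduct {f : R} :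
    IsFreeAway f M ↔ Module.Free (Localization.Away f) (Localization.Away f ⊗[R] M) :=
  Module.Free.iff_of_equiv (LocalizedModule.equivTensorProduct (Submonoid.powers f) M)

lemma IsFreeAway.of_dvd {f g : R} (hfg : f ∣ g) (h : IsFreeAway f M) : IsFreeAway g M := by
  rw [isFreeAway_iff_tensorProduct] at h ⊢
  have hu : IsUnit (algebraMap R (Localization.Away g) f) :=
    isUnit_of_dvd_unit (map_dvd _ hfg) (IsLocalization.Away.algebraMap_isUnit g)
  let φ : Localization.Away f →ₐ[R] Localization.Away g :=
    { IsLocalization.Away.lift f hu with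
      commutes' := fun r ↦ IsLocalization.Away.lift_eq f hu r }
  let := φ.toRingHom.toAlgebra
  have : IsScalarTower R (Localization.Away f) (Localization.Away g) :=
    IsScalarTower.of_algebraMap_eq' φ.comp_algebraMap.symm
  exact Module.Free.of_equiv (TensorProduct.AlgebraTensorModule.cancelBaseChange R
    (Localization.Away f) (Localization.Away g) (Localization.Away g) M)

lemma IsFreeAway.of_filtration {f : R} (F : ℕ → Submodule R M) (h0 : F 0 = ⊥) (hF : Monotone F)
    (htop : ⨆ i, F i = ⊤) (Q : ℕ → Type*) [∀ i, AddCommGroup (Q i)] [∀ i, Module R (Q i)]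
    (hQ : ∀ i, IsFreeAway f (Q i)) (q : ∀ i, F (i + 1) →ₗ[R] Q i)
    (hq : ∀ i, Function.Surjective (q i))
    (hker : ∀ i (x : F (i + 1)), q i x = 0 ↔ (x : M) ∈ F i) : IsFreeAway f M := by
  let S := Submonoid.powers f
  let ι := LocalizedModule.mkLinearMap S M
  have (i : ℕ) : Module.Free (Localization S) (LocalizedModule S (Q i)) := hQ i
  have hgc := (Submodule.localized'gi (Localization S) S ι).gc
  refine Module.Free.of_filtration (fun i ↦ (F i).localized S) (by simp [h0])
    (hgc.monotone_l.comp hF) ?_ (fun i ↦ LocalizedModule S (Q i))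
    (fun i ↦ IsLocalizedModule.mapExtendScalars S
      ((F (i + 1)).toLocalized' (Localization S) S ι) (LocalizedModule.mkLinearMap S (Q i))
      (Localization S) (q i)) ?_ ?_
  · exact hgc.l_iSup.symm.trans (by rw [htop]; exact Submodule.localized'_top _ _ _)
  · exact fun i ↦ IsLocalizedModule.map_surjective S _ _ (q i) (hq i)
  · intro i x
    obtain ⟨⟨m, s⟩, rfl⟩ := IsLocalizedModule.mk'_surjective S
      ((F (i + 1)).toLocalized' (Localization S) S ι) x
    have hx : ((IsLocalizedModule.mk' ((F (i + 1)).toLocalized' (Localization S) S ι) m s :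
        (F (i + 1)).localized S) : LocalizedModule S M) = IsLocalizedModule.mk' ι (m : M) s := by
      rw [eq_comm, IsLocalizedModule.mk'_eq_iff]
      exact (congrArg Subtype.val (IsLocalizedModule.mk'_cancel'
        ((F (i + 1)).toLocalized' (Localization S) S ι) m s)).symm
    change IsLocalizedModule.map S _ _ (q i) (IsLocalizedModule.mk' _ m s) = 0 ↔ _
    rw [IsLocalizedModule.map_mk', IsLocalizedModule.mk'_eq_zero', Function.uncurry_apply_pair, hx]
    constructor
    · rintro ⟨c, hc⟩
      refine ⟨(c • m : F (i + 1)), (hker i _).mp ?_, c * s, ?_⟩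
      · rw [← hc]
        exact (q i).map_smul_of_tower c m
      · exact IsLocalizedModule.mk'_cancel_left ι (m : M) c s
    · rintro ⟨y, hy, t, hyt⟩
      obtain ⟨c, hc⟩ := (IsLocalizedModule.mk'_eq_mk'_iff ι _ _ _ _).mp hyt
      refine ⟨c * t, ?_⟩
      have h1 : q i ((c * t) • m) = 0 := by
        rw [hker]
        have : (((c * t) • m : F (i + 1)) : M) = (c * s) • y := by
          simpa [mul_smul] using hc
        rw [this]
        exact (F i).smul_of_tower_mem _ hy
      rw [← h1]
      exact ((q i).map_smul_of_tower (c * t) m).symm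

lemma IsGenericallyFree.of_finite [IsDomain R] [IsNoetherianRing R] [Module.Finite R M] :
    IsGenericallyFree R M := by
  have := Module.finitePresentation_of_finite R M
  obtain ⟨f, hf, hfree, -⟩ := Module.FinitePresentation.exists_free_localizedModule_powers
    (nonZeroDivisors R) (LocalizedModule.mkLinearMap (nonZeroDivisors R) M) (FractionRing R)
  exact ⟨f, nonZeroDivisors.ne_zero hf, fun g _ hfg ↦ IsFreeAway.of_dvd hfg hfree⟩

/-- If `M` is generated by a submodule `N` under the powers of a `B`-linear endomorphism, then
generic freeness of all quotients of `N` implies that of `M`. -/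
lemma IsGenericallyFree.of_iSup_map_pow [IsDomain R] {B : Type*} [CommRing B] [Algebra R B]
    [Module B M] [IsScalarTower R B M] (φ : Module.End B M) (N : Submodule B M)
    [IsNoetherian B N] (htop : ⨆ j, N.map (φ ^ j) = ⊤)
    (H : ∀ K : Submodule B N, IsGenericallyFree R (N ⧸ K)) : IsGenericallyFree R M := by
  let F : ℕ → Submodule B M := fun i ↦ ⨆ j < i, N.map (φ ^ j)
  have hF : Monotone F := fun i k hik ↦ biSup_mono fun j hj ↦ hj.trans_le hik
  have hle : ∀ i, N.map (φ ^ i) ≤ F (i + 1) := fun i ↦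
    le_iSup₂_of_le (f := fun j (_ : j < i + 1) ↦ N.map (φ ^ j)) i i.lt_succ_self le_rfl
  have hsucc : ∀ i, F (i + 1) = F i ⊔ N.map (φ ^ i) := fun i ↦ Nat.iSup_lt_succ _ i
  have hφF : ∀ i, ∀ x ∈ F i, φ x ∈ F (i + 1) := by
    intro i
    change F i ≤ (F (i + 1)).comap φ
    refine iSup₂_le fun j hj ↦ ?_
    rintro _ ⟨n, hn, rfl⟩
    refine hF (show j + 1 + 1 ≤ i + 1 by omega) (hle (j + 1) ⟨n, hn, ?_⟩)
    rw [pow_succ', Module.End.mul_apply]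
  let K : ℕ →o Submodule B N :=
    { toFun := fun i ↦ (F i).comap ((φ ^ i) ∘ₗ N.subtype)
      monotone' := monotone_nat_of_le_succ fun i x hx ↦ by
        have := hφF i _ hx
        simpa [pow_succ'] using this }
  obtain ⟨n, hn⟩ := monotone_stabilizes_iff_noetherian.mpr ‹IsNoetherian B N› K
  choose f hf0 hf using fun i ↦ H (K i)
  refine ⟨∏ i ∈ Finset.range (n + 1), f i, Finset.prod_ne_zero_iff.mpr fun i _ ↦ hf0 i, ?_⟩
  intro g hg hfg
  have hK : ∀ i, IsFreeAway g (N ⧸ K i) := by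
    have hsmall : ∀ i ≤ n, IsFreeAway g (N ⧸ K i) := fun i hi ↦
      hf i g hg ((Finset.dvd_prod_of_mem f (Finset.mem_range.mpr (by omega))).trans hfg)
    intro i
    obtain hi | hi := le_total i n
    · exact hsmall i hi
    · rw [← hn i hi]
      exact hsmall n le_rfl
  let p : ∀ i, N →ₗ[B] F (i + 1) := fun i ↦
    ((φ ^ i) ∘ₗ N.subtype).codRestrict (F (i + 1)) fun x ↦ hle i ⟨x, x.2, rfl⟩
  let r : ∀ i, F (i + 1) →ₗ[B] F (i + 1) ⧸ (F i).submoduleOf (F (i + 1)) := fun i ↦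
    Submodule.mkQ _
  have hrsurj : ∀ i, Function.Surjective (r i) := fun i ↦ Submodule.mkQ_surjective _
  have hr : ∀ i (x : F (i + 1)), r i x = 0 ↔ (x : M) ∈ F i := fun i x ↦
    Submodule.Quotient.mk_eq_zero _
  have hker : ∀ i, LinearMap.ker (r i ∘ₗ p i) = K i := fun i ↦ Submodule.ext fun x ↦ hr i (p i x)
  have hsurj : ∀ i, Function.Surjective (r i ∘ₗ p i) := by
    intro i y
    obtain ⟨⟨x, hx⟩, rfl⟩ := hrsurj i y
    have hx' := hx
    rw [hsucc] at hx'
    obtain ⟨a, ha, _, ⟨b, hb, rfl⟩, hab⟩ := Submodule.mem_sup.mp hx'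
    refine ⟨⟨b, hb⟩, ?_⟩
    rw [← sub_eq_zero]
    change r i (p i ⟨b, hb⟩) - r i ⟨x, hx⟩ = 0
    rw [← map_sub, hr]
    change (φ ^ i) b - x ∈ F i
    rw [← hab, sub_add_cancel_right]
    exact neg_mem ha
  refine IsFreeAway.of_filtration (fun i ↦ (F i).restrictScalars R) ?_ (fun i k h ↦ hF h) ?_
    (fun i ↦ F (i + 1) ⧸ (F i).submoduleOf (F (i + 1))) (fun i ↦ ?_)
    (fun i ↦ (r i).restrictScalars R) hrsurj hr
  · simp [F]
  · rw [eq_top_iff]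
    rintro x -
    have hFtop : ⨆ i, F i = ⊤ := eq_top_iff.mpr (htop ▸ iSup_mono' fun i ↦ ⟨i + 1, hle i⟩)
    obtain ⟨i, hi⟩ := (Submodule.mem_iSup_of_directed F hF.directed_le).mp
      (hFtop ▸ Submodule.mem_top : x ∈ ⨆ i, F i)
    exact Submodule.mem_iSup_of_mem i hi
  · exact (hK i).of_equiv (((Submodule.quotEquivOfEq _ _ (hker i).symm).trans
      ((r i ∘ₗ p i).quotKerEquivOfSurjective (hsurj i))).restrictScalars R)

end LocalizedFree

/-- Generic freeness for modules over an algebra generated by `n` elements. -/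
lemma IsGenericallyFree.of_adjoin_range_eq_top {R : Type*} [CommRing R] [IsDomain R]
    [IsNoetherianRing R] (n : ℕ) {T : Type*} [CommRing T] [Algebra R T] (v : Fin n → T)
    (hv : Algebra.adjoin R (Set.range v) = ⊤) (M : Type*) [AddCommGroup M] [Module R M]
    [Module T M] [IsScalarTower R T M] [Module.Finite T M] : IsGenericallyFree R M := by
  induction n generalizing T M with
  | zero =>
    have hsurj : Function.Surjective (algebraMap R T) := by
      rw [Algebra.surjective_algebraMap_iff, ← hv]
      simp
    have : Module.Finite R T := Module.Finite.of_surjective (Algebra.linearMap R T) hsurj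
    have : Module.Finite R M := Module.Finite.trans T M
    exact IsGenericallyFree.of_finite
  | succ n ih =>
    let w : Fin n → T := fun i ↦ v i.succ
    let B := Algebra.adjoin R (Set.range w)
    let w' : Fin n → B := fun i ↦ ⟨w i, Algebra.subset_adjoin ⟨i, rfl⟩⟩
    have hw' : Algebra.adjoin R (Set.range w') = ⊤ := by
      rw [← Algebra.adjoin_adjoin_coe_preimage (R := R) (s := Set.range w)]
      congr 1
      ext b
      simp [w', Subtype.ext_iff]
    have : IsNoetherianRing B :=
      isNoetherianRing_of_fg (Subalgebra.fg_def.2 ⟨_, Set.finite_range w, rfl⟩)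
    obtain ⟨s, hs⟩ := (Module.Finite.fg_top : (⊤ : Submodule T M).FG)
    let N : Submodule B M := Submodule.span B s
    have : Module.Finite B N := Module.Finite.of_fg ⟨s, rfl⟩
    let φ : Module.End B M := LinearMap.lsmul T M (v 0) |>.restrictScalars B
    let W : Submodule B M := ⨆ j, N.map (φ ^ j)
    have hφ : ∀ m ∈ W, v 0 • m ∈ W := by
      change W ≤ W.comap φ
      refine iSup_le fun j ↦ ?_
      rintro _ ⟨m, hm, rfl⟩
      refine Submodule.mem_iSup_of_mem (j + 1) ⟨m, hm, ?_⟩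
      rw [pow_succ', Module.End.mul_apply]
    have hW : ∀ t : T, ∀ m ∈ W, t • m ∈ W := by
      intro t
      have ht : t ∈ Algebra.adjoin R (Set.range v) := hv ▸ Algebra.mem_top
      induction ht using Algebra.adjoin_induction with
      | mem x hx =>
        obtain ⟨i, rfl⟩ := hx
        cases i using Fin.cases with
        | zero => exact hφ
        | succ i => exact fun m hm ↦ W.smul_mem (w' i) hm
      | algebraMap r =>
        intro m hm
        rw [algebraMap_smul]
        exact W.smul_of_tower_mem r hm
      | add x y _ _ hx hy =>
        intro m hm
        rw [add_smul]
        exact add_mem (hx m hm) (hy m hm)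
      | mul x y _ _ hx hy =>
        intro m hm
        rw [mul_smul]
        exact hx _ (hy m hm)
    have hWtop : W = ⊤ := by
      let W' : Submodule T M := { W with smul_mem' := fun t m hm ↦ hW t m hm }
      have hle : (⊤ : Submodule T M) ≤ W' := by
        rw [← hs, Submodule.span_le]
        intro m hm
        exact Submodule.mem_iSup_of_mem 0 ⟨m, Submodule.subset_span hm, by simp⟩
      exact eq_top_iff.mpr fun m _ ↦ hle (Submodule.mem_top : m ∈ (⊤ : Submodule T M))
    exact IsGenericallyFree.of_iSup_map_pow φ N hWtop fun K ↦ ih w' hw' (N ⧸ K)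

/-- Grothendieck's generic freeness lemma: if `R` is a Noetherian domain, `T` a finitely
generated commutative `R`-algebra and `M` a finitely generated `T`-module, then there is a
nonzero `f ∈ R` such that the localization `M_f` is free over `R_f`. -/
theorem generic_freeness
    (R T M : Type u) [CommRing R] [IsDomain R] [IsNoetherianRing R]
    [CommRing T] [Algebra R T] [Algebra.FiniteType R T]
    [AddCommGroup M] [Module R M] [Module T M] [IsScalarTower R T M]
    [Module.Finite T M] :
    ∃ f : R, f ≠ 0 ∧
      Module.Free (Localization.Away f) (LocalizedModule (Submonoid.powers f) M) := by
  obtain ⟨s, hs⟩ := (Algebra.FiniteType.out : (⊤ : Subalgebra R T).FG)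
  obtain ⟨f, hf, h⟩ := IsGenericallyFree.of_adjoin_range_eq_top (R := R) s.card
    (fun i ↦ (s.equivFin.symm i : T)) (by
      rw [← hs]
      congr 1
      ext x
      simp [← s.equivFin.symm.surjective.exists (p := fun y ↦ (y : T) = x)]) M
  exact ⟨f, hf, h f hf dvd_rfl⟩
end
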